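/- arXiv:1504.00296 — 5 statements merged into one kernel-verified Lean document; each statement's English description precedes it below -/
import Mathlib

section
/- In the coupon collector process with B ≥ 1 distinct coupons, where coupons are drawn independently and uniformly at random, the expected value of the stopping time T_B (the first time n at which all B distinct coupons have appeared among the first n draws) equals B·H(B), where H(B) = Σ_{i=1}^{B} 1/i is the B-th harmonic number. -/
open MeasureTheory ProbabilityTheory
open scoped ENNReal

/-- The `n`-th harmonic number `H(n) = ∑_{i=1}^n 1/i`, as a real number. -/
noncomputable def H (n : ℕ) : ℝ := ∑ i ∈ Finset.Icc 1 n, (1 : ℝ) / i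

/-- The uniform probability measure on `Fin B`. -/
noncomputable def uniformFin (B : ℕ) : Measure (Fin B) :=
  (B : ℝ≥0∞)⁻¹ • Measure.count

/-- The coupon collector stopping time: the least `n` such that all `B` distinct coupons
appear among the first `n` draws `ω 0, …, ω (n-1)`. -/
noncomputable def coverTime (B : ℕ) (ω : ℕ → Fin B) : ℕ :=
  sInf {n : ℕ | ∀ c : Fin B, ∃ i < n, ω i = c}

theorem cc_altsum (n : ℕ) :
    ∑ k ∈ Finset.range (n + 1), (n.choose k : ℝ) * ((-1) ^ (k + 1) * (1 / (k : ℝ))) = H n := by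
  induction n with
  | zero => simp [H]
  | succ n ih =>
    have hH : H (n + 1) = H n + 1 / ((n : ℝ) + 1) := by
      unfold H
      rw [Finset.sum_Icc_succ_top (by omega)]
      push_cast
      rfl
    rw [hH, ← ih]
    have h0 := @Int.alternating_sum_range_choose_of_ne (n + 1) (by omega)
    have h1 : ∑ m ∈ Finset.range (n + 1 + 1), ((-1 : ℝ) ^ m * ((n + 1).choose m : ℝ)) = 0 := by
      exact_mod_cast h0
    rw [Finset.sum_range_succ'] at h1
    rw [Finset.sum_range_succ']
    have h2 : ∀ k : ℕ, ((n + 1).choose (k + 1) : ℝ) * ((-1) ^ (k + 1 + 1) * (1 / ((k + 1 : ℕ) : ℝ)))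
        = (n.choose (k + 1) : ℝ) * ((-1) ^ (k + 1 + 1) * (1 / ((k + 1 : ℕ) : ℝ)))
          + (-1 / ((n : ℝ) + 1)) * ((-1 : ℝ) ^ (k + 1) * ((n + 1).choose (k + 1) : ℝ)) := by
      intro k
      have h3 : ((n : ℝ) + 1) * (n.choose k : ℝ) = ((n + 1).choose (k + 1) : ℝ) * ((k : ℝ) + 1) := by
        exact_mod_cast Nat.add_one_mul_choose_eq n k
      have h4 : ((n + 1).choose (k + 1) : ℝ) = n.choose k + n.choose (k + 1) := by
        exact_mod_cast Nat.choose_succ_succ n k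
      have hn : (n : ℝ) + 1 ≠ 0 := by positivity
      have hk : (k : ℝ) + 1 ≠ 0 := by positivity
      have h5 : (n.choose k : ℝ) / ((k : ℝ) + 1) = ((n + 1).choose (k + 1) : ℝ) / ((n : ℝ) + 1) := by
        rw [div_eq_div_iff hk hn]; linarith
      have h6 : (n.choose (k + 1) : ℝ) = ((n + 1).choose (k + 1) : ℝ) - n.choose k := by linarith
      rw [h6]
      push_cast
      linear_combination ((-1 : ℝ) ^ (k + 1 + 1)) * h5
    simp_rw [h2]
    rw [Finset.sum_add_distrib, ← Finset.mul_sum]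
    have h7 : ∑ i ∈ Finset.range (n + 1), ((-1 : ℝ) ^ (i + 1) * ((n + 1).choose (i + 1) : ℝ)) = -1 := by
      simp at h1
      linarith
    rw [h7, Finset.sum_range_succ, Finset.sum_range_succ' _ n]
    simp [Nat.choose_succ_self]
    ring

theorem cc_prob (B : ℕ) (hB : 1 ≤ B) (μ : Measure (ℕ → Fin B)) [IsProbabilityMeasure μ]
    (hIndep : iIndepFun (fun i (ω : ℕ → Fin B) => ω i) μ)
    (hUnif : ∀ i : ℕ, μ.map (fun ω => ω i) = uniformFin B) (S : Finset (Fin B)) (n : ℕ) :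
    μ.real (⋂ c ∈ S, {ω : ℕ → Fin B | ∀ i < n, ω i ≠ c}) = (1 - (S.card : ℝ) / B) ^ n := by
  have hset : (⋂ c ∈ S, {ω : ℕ → Fin B | ∀ i < n, ω i ≠ c})
      = ⋂ i ∈ Finset.range n, (fun ω : ℕ → Fin B => ω i) ⁻¹' ((Sᶜ : Finset (Fin B)) : Set (Fin B)) := by
    ext ω
    simp only [Set.mem_iInter, Set.mem_ofPred_eq, Finset.mem_range, Set.mem_preimage,
      Finset.mem_coe, Finset.mem_compl]
    exact ⟨fun h i hi hm => h _ hm i hi rfl, fun h c hc i hi e => h i hi (e ▸ hc)⟩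
  have hB' : (B : ℝ) ≠ 0 := by positivity
  rw [hset, measureReal_def, hIndep.measure_inter_preimage_eq_mul _
    (fun i _ => Finset.measurableSet _)]
  have h1 : ∀ i, μ ((fun ω : ℕ → Fin B => ω i) ⁻¹' ((Sᶜ : Finset (Fin B)) : Set (Fin B)))
      = (B : ℝ≥0∞)⁻¹ * ((Sᶜ : Finset (Fin B)).card : ℝ≥0∞) := by
    intro i
    rw [← Measure.map_apply (measurable_pi_apply i) (Finset.measurableSet _), hUnif i, uniformFin]
    simp only [Measure.smul_apply, smul_eq_mul, Measure.count_apply_finset]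
  simp_rw [h1]
  rw [Finset.prod_const, Finset.card_range, ENNReal.toReal_pow]
  congr 1
  rw [ENNReal.toReal_mul, ENNReal.toReal_inv, ENNReal.toReal_natCast, ENNReal.toReal_natCast,
    Finset.card_compl, Fintype.card_fin, Nat.cast_sub (by simpa using S.card_le_univ)]
  field_simp

theorem cc_pointwise (B : ℕ) (ω : ℕ → Fin B) :
    (coverTime B ω : ℝ) = (∑' n : ℕ, (⋃ c ∈ (Finset.univ : Finset (Fin B)),
      {ω : ℕ → Fin B | ∀ i < n, ω i ≠ c}).indicator (fun _ => (1 : ℝ≥0∞)) ω).toReal := by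
  by_cases h : ∃ n, ∀ c : Fin B, ∃ i < n, ω i = c
  · have hmem : ∀ c : Fin B, ∃ i < coverTime B ω, ω i = c := Nat.sInf_mem (s := {n : ℕ | ∀ c : Fin B, ∃ i < n, ω i = c}) h
    have hiff : ∀ n, ω ∈ (⋃ c ∈ (Finset.univ : Finset (Fin B)),
        {ω : ℕ → Fin B | ∀ i < n, ω i ≠ c}) ↔ n ∈ Finset.range (coverTime B ω) := by
      intro n
      simp only [Finset.mem_univ, Set.iUnion_true, Set.mem_iUnion, Set.mem_ofPred_eq,
        Finset.mem_range]
      constructor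
      · rintro ⟨c, hc⟩
        by_contra hn
        obtain ⟨i, hi, e⟩ := hmem c
        exact hc i (by omega) e
      · intro hn
        have := Nat.notMem_of_lt_sInf hn
        simpa using this
    rw [tsum_eq_sum (s := Finset.range (coverTime B ω))
      (fun n hn => Set.indicator_of_notMem (fun h' => hn ((hiff n).1 h')) _)]
    rw [Finset.sum_congr rfl (fun n hn => Set.indicator_of_mem ((hiff n).2 hn) _)]
    simp
  · have h0 : coverTime B ω = 0 := by
      unfold coverTime
      rw [Nat.sInf_eq_zero]
      right
      ext n
      simp only [Set.mem_ofPred_eq, Set.mem_empty_iff_false, iff_false]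
      exact fun hn => h ⟨n, hn⟩
    have h1 : ∀ n, (⋃ c ∈ (Finset.univ : Finset (Fin B)),
      {ω : ℕ → Fin B | ∀ i < n, ω i ≠ c}).indicator (fun _ => (1 : ℝ≥0∞)) ω = 1 := by
      intro n
      apply Set.indicator_of_mem
      push Not at h
      simpa using h n
    simp_rw [h1, ENNReal.tsum_const_eq_top_of_ne_zero one_ne_zero]
    simp [h0]

/-- **Coupon collector's problem.** If `μ` is a probability measure on `ℕ → Fin B` under which
the coordinates (draws) are independent and each is uniformly distributed on the `B ≥ 1` coupons,
then the expected value of the stopping time `T_B` equals `B * H(B)`. -/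
theorem coupon_collector_expectation
    (B : ℕ) (hB : 1 ≤ B) (μ : Measure (ℕ → Fin B)) [IsProbabilityMeasure μ]
    (hIndep : iIndepFun (fun i (ω : ℕ → Fin B) => ω i) μ)
    (hUnif : ∀ i : ℕ, μ.map (fun ω => ω i) = uniformFin B) :
    ∫ ω, (coverTime B ω : ℝ) ∂μ = B * H B := by
  have hB' : (0 : ℝ) < B := by exact_mod_cast hB
  have hm1 : ∀ (n : ℕ) (c : Fin B), MeasurableSet {ω : ℕ → Fin B | ∀ i < n, ω i ≠ c} := by
    intro n c
    have : {ω : ℕ → Fin B | ∀ i < n, ω i ≠ c}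
        = ⋂ i ∈ Finset.range n, (fun ω : ℕ → Fin B => ω i) ⁻¹' {c}ᶜ := by
      ext ω; simp
    rw [this]
    exact Finset.measurableSet_biInter _
      (fun i _ => measurable_pi_apply i (MeasurableSet.singleton c).compl)
  have hm : ∀ n : ℕ, MeasurableSet (⋃ c ∈ (Finset.univ : Finset (Fin B)),
      {ω : ℕ → Fin B | ∀ i < n, ω i ≠ c}) :=
    fun n => Finset.measurableSet_biUnion _ (fun c _ => hm1 n c)
  have hsum : HasSum (fun n : ℕ => μ.real (⋃ c ∈ (Finset.univ : Finset (Fin B)),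
      {ω : ℕ → Fin B | ∀ i < n, ω i ≠ c})) (B * H B) := by
    have e1 : (fun n : ℕ => μ.real (⋃ c ∈ (Finset.univ : Finset (Fin B)),
        {ω : ℕ → Fin B | ∀ i < n, ω i ≠ c})) = fun n : ℕ =>
        ∑ S ∈ (Finset.univ : Finset (Fin B)).powerset with S.Nonempty,
          (-1 : ℝ) ^ (S.card + 1) * (1 - (S.card : ℝ) / B) ^ n := by
      funext n
      rw [measureReal_biUnion_eq_sum_powerset (fun c _ => hm1 n c)]
      simp_rw [cc_prob B hB μ hIndep hUnif]
    have e2 : B * H B = ∑ S ∈ (Finset.univ : Finset (Fin B)).powerset with S.Nonempty,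
          (-1 : ℝ) ^ (S.card + 1) * (1 - (1 - (S.card : ℝ) / B))⁻¹ := by
      rw [← cc_altsum B]
      have h := Finset.sum_powerset_apply_card (fun k => (-1 : ℝ) ^ (k + 1) * (1 / (k : ℝ)))
        (x := (Finset.univ : Finset (Fin B)))
      simp only [Finset.card_univ, Fintype.card_fin, nsmul_eq_mul] at h
      rw [← h, Finset.mul_sum, Finset.sum_filter]
      refine Finset.sum_congr rfl fun S _ => ?_
      split_ifs with hS
      · rw [sub_sub_cancel, inv_div]; ring
      · rw [Finset.not_nonempty_iff_eq_empty.1 hS]; simp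
    rw [e1, e2]
    refine hasSum_sum fun S hS => ?_
    have hc : 0 < S.card := Finset.card_pos.2 (Finset.mem_filter.1 hS).2
    have hc' : (0 : ℝ) < S.card := by exact_mod_cast hc
    have hle : (S.card : ℝ) ≤ B := by
      exact_mod_cast (by simpa using S.card_le_univ : S.card ≤ B)
    refine (hasSum_geometric_of_lt_one ?_ ?_).mul_left _
    · rw [sub_nonneg, div_le_one hB']; exact hle
    · have := div_pos hc' hB'
      linarith
  have hl : ∫⁻ ω, ∑' n : ℕ, (⋃ c ∈ (Finset.univ : Finset (Fin B)),
      {ω : ℕ → Fin B | ∀ i < n, ω i ≠ c}).indicator (fun _ => (1 : ℝ≥0∞)) ω ∂μ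
      = ENNReal.ofReal (B * H B) := by
    rw [lintegral_tsum (fun n => (measurable_const.indicator (hm n)).aemeasurable),
      ← hsum.tsum_eq, ENNReal.ofReal_tsum_of_nonneg (fun n => measureReal_nonneg) hsum.summable]
    refine tsum_congr fun n => ?_
    rw [lintegral_indicator_const (hm n), one_mul, ofReal_measureReal (measure_ne_top _ _)]
  have hmeas : Measurable (fun ω => ∑' n : ℕ, (⋃ c ∈ (Finset.univ : Finset (Fin B)),
      {ω : ℕ → Fin B | ∀ i < n, ω i ≠ c}).indicator (fun _ => (1 : ℝ≥0∞)) ω) :=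
    Measurable.ennreal_tsum (fun n => measurable_const.indicator (hm n))
  simp_rw [cc_pointwise B]
  rw [integral_toReal hmeas.aemeasurable (ae_lt_top hmeas (by rw [hl]; exact ENNReal.ofReal_ne_top)),
    hl, ENNReal.toReal_ofReal]
  exact hsum.nonneg (fun n => measureReal_nonneg)
end

section
/- In the coupon collector process with B distinct coupons and replacement parameter K with 1 ≤ K ≤ B, where coupons are drawn independently and uniformly at random, the expected value of the stopping time T_{B,K} (the first time n at which at least B − K distinct coupons have appeared among the first n draws) equals B·(H(B) − H(K)). Consequently the mean number of cards obtained by a single collector who buys until only K coupons are missing and then purchases those K missing coupons directly is B·(H(B) − H(K)) + K, so the factor f = (E[T_{B,K}] + K)/B equals H(B) − H(K) + K/B. -/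
open MeasureTheory ProbabilityTheory
open scoped ENNReal

/-- The stopping time `T_{B,K}`: the least `n` such that at least `B - K` distinct coupons
appear among the first `n` draws `ω 0, …, ω (n-1)`. -/
noncomputable def collectTime (B K : ℕ) (ω : ℕ → Fin B) : ℕ :=
  sInf {n : ℕ | B - K ≤ (Finset.image ω (Finset.range n)).card}

/-- The set of coupons seen among the first `n` draws. -/
def seen {B : ℕ} (n : ℕ) (ω : ℕ → Fin B) : Finset (Fin B) := Finset.image ω (Finset.range n)

lemma seen_eq {B : ℕ} (n : ℕ) (ω : ℕ → Fin B) :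
    seen n ω = Finset.univ.image (fun i : Finset.range n => ω i) := by
  ext x
  simp [seen]

lemma seen_succ {B : ℕ} (n : ℕ) (ω : ℕ → Fin B) :
    seen (n + 1) ω = insert (ω n) (seen n ω) := by
  simp [seen, Finset.range_add_one, Finset.image_insert]

lemma seen_mono {B : ℕ} (ω : ℕ → Fin B) {m n : ℕ} (h : m ≤ n) : seen m ω ⊆ seen n ω :=
  Finset.image_subset_image (Finset.range_mono h)

lemma measurableSet_seen {B : ℕ} (n : ℕ) (P : Finset (Fin B) → Prop) :
    MeasurableSet {ω : ℕ → Fin B | P (seen n ω)} := by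
  have h : {ω : ℕ → Fin B | P (seen n ω)} =
      (fun ω (i : Finset.range n) => ω i) ⁻¹' {x | P (Finset.univ.image x)} := by
    ext ω
    simp [seen_eq]
  rw [h]
  have hm : Measurable (fun (ω : ℕ → Fin B) (i : Finset.range n) => ω i) := by fun_prop
  exact hm (Set.toFinite _).measurableSet

lemma indep_step {B : ℕ} (hB : 0 < B) (μ : Measure (ℕ → Fin B)) [IsProbabilityMeasure μ]
    (hIndep : iIndepFun (fun i (ω : ℕ → Fin B) => ω i) μ)
    (hUnif : ∀ i : ℕ, μ.map (fun ω => ω i) = uniformFin B) (n : ℕ) (s : Finset (Fin B)) :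
    μ.real {ω | seen n ω = s ∧ ω n ∉ s} = μ.real {ω | seen n ω = s} * (((B : ℝ) - s.card) / B) := by
  have h1 := hIndep.indepFun_finset (Finset.range n) {n} (by simp) (fun i => measurable_pi_apply i)
  have h2 := h1.measure_inter_preimage_eq_mul {x | Finset.univ.image x = s}
    {y | y ⟨n, by simp⟩ ∉ s} (Set.toFinite _).measurableSet (Set.toFinite _).measurableSet
  have e1 : (fun (ω : ℕ → Fin B) (i : Finset.range n) => ω i) ⁻¹' {x | Finset.univ.image x = s}
      = {ω | seen n ω = s} := by
    ext ω
    simp [seen_eq]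
  have e2 : (fun (ω : ℕ → Fin B) (i : ({n} : Finset ℕ)) => ω i) ⁻¹' {y | y ⟨n, by simp⟩ ∉ s}
      = {ω | ω n ∉ s} := by
    ext ω
    simp
  rw [e1, e2] at h2
  have h3 : μ.real {ω | ω n ∉ s} = ((B : ℝ) - s.card) / B := by
    have : μ {ω | ω n ∉ s} = (B : ℝ≥0∞)⁻¹ * (sᶜ.card : ℝ≥0∞) := by
      have h4 : μ.map (fun ω => ω n) (↑(sᶜ) : Set (Fin B)) = μ {ω | ω n ∉ s} := by
        rw [Measure.map_apply (measurable_pi_apply n) (Set.toFinite _).measurableSet]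
        congr 1
        ext ω
        simp
      rw [← h4, hUnif, uniformFin, Measure.smul_apply, Measure.count_apply_finset, smul_eq_mul]
    rw [measureReal_def, this, ENNReal.toReal_mul, ENNReal.toReal_inv]
    rw [Finset.card_compl, Fintype.card_fin]
    have : s.card ≤ B := by simpa using s.card_le_univ
    simp only [ENNReal.toReal_natCast]
    rw [Nat.cast_sub this]
    ring
  rw [← h3]
  simp only [measureReal_def]
  rw [← ENNReal.toReal_mul, ← h2]
  rfl

lemma lt_eq_sum {B : ℕ} (μ : Measure (ℕ → Fin B)) [IsProbabilityMeasure μ] (n m : ℕ) :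
    μ.real {ω | (seen n ω).card < m} =
      ∑ j ∈ Finset.range m, μ.real {ω | (seen n ω).card = j} := by
  rw [← measureReal_biUnion_finset]
  · congr 1
    ext ω
    simp
  · intro i _ j _ hij
    refine Set.disjoint_left.2 ?_
    intro ω h1 h2
    exact hij (h1.symm.trans h2)
  · intro j _
    exact measurableSet_seen n (fun s => s.card = j)

lemma step {B : ℕ} (hB : 0 < B) (μ : Measure (ℕ → Fin B)) [IsProbabilityMeasure μ]
    (hIndep : iIndepFun (fun i (ω : ℕ → Fin B) => ω i) μ)
    (hUnif : ∀ i : ℕ, μ.map (fun ω => ω i) = uniformFin B) (n j : ℕ) :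
    μ.real {ω | (seen n ω).card < j + 1} = μ.real {ω | (seen (n + 1) ω).card < j + 1} +
      μ.real {ω | (seen n ω).card = j} * (((B : ℝ) - j) / B) := by
  have hms : ∀ s : Finset (Fin B), MeasurableSet {ω : ℕ → Fin B | seen n ω = s ∧ ω n ∉ s} := by
    intro s
    refine (measurableSet_seen n (fun t => t = s)).inter ?_
    have hm : Measurable (fun ω : ℕ → Fin B => ω n) := measurable_pi_apply n
    exact hm (Set.toFinite {x : Fin B | x ∉ s}).measurableSet
  have hA : μ.real {ω | (seen n ω).card = j} =
      ∑ s ∈ Finset.powersetCard j Finset.univ, μ.real {ω | seen n ω = s} := by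
    rw [← measureReal_biUnion_finset]
    · congr 1
      ext ω
      simp [Finset.mem_powersetCard]
    · intro i _ j _ hij
      refine Set.disjoint_left.2 ?_
      intro ω h1 h2
      exact hij (h1.symm.trans h2)
    · intro s _
      exact measurableSet_seen n (fun t => t = s)
  have hB' : μ.real {ω | (seen n ω).card = j ∧ ω n ∉ seen n ω} =
      ∑ s ∈ Finset.powersetCard j Finset.univ, μ.real {ω | seen n ω = s ∧ ω n ∉ s} := by
    rw [← measureReal_biUnion_finset]
    · congr 1
      ext ω
      simp [Finset.mem_powersetCard]
    · intro i _ j _ hij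
      refine Set.disjoint_left.2 ?_
      intro ω h1 h2
      exact hij (h1.1.symm.trans h2.1)
    · intro s _
      exact hms s
  have hC : μ.real {ω | (seen n ω).card = j ∧ ω n ∉ seen n ω} =
      μ.real {ω | (seen n ω).card = j} * (((B : ℝ) - j) / B) := by
    rw [hA, hB', Finset.sum_mul]
    refine Finset.sum_congr rfl fun s hs => ?_
    rw [indep_step hB μ hIndep hUnif, (Finset.mem_powersetCard.1 hs).2]
  rw [← hC, add_comm (μ.real _) (μ.real _), ← measureReal_union]
  · congr 1
    ext ω
    simp only [Set.mem_ofPred_eq, Set.mem_union, seen_succ]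
    by_cases h : ω n ∈ seen n ω
    · simp [h]
    · simp [h]
      omega
  · refine Set.disjoint_left.2 ?_
    rintro ω ⟨h1, h2⟩ h3
    simp only [Set.mem_ofPred_eq, seen_succ, Finset.card_insert_of_notMem h2] at h3
    omega
  · exact measurableSet_seen (n + 1) (fun s => s.card < j + 1)

lemma hasSum_card {B : ℕ} (hB : 0 < B) (μ : Measure (ℕ → Fin B)) [IsProbabilityMeasure μ]
    (hIndep : iIndepFun (fun i (ω : ℕ → Fin B) => ω i) μ)
    (hUnif : ∀ i : ℕ, μ.map (fun ω => ω i) = uniformFin B) :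
    ∀ j, j < B → HasSum (fun n => μ.real {ω | (seen n ω).card = j}) ((B : ℝ) / (B - j)) := by
  have hpart : ∀ j, j < B → ∀ N, ∑ n ∈ Finset.range N, μ.real {ω | (seen n ω).card = j} =
      (1 - μ.real {ω | (seen N ω).card < j + 1}) * ((B : ℝ) / (B - j)) := by
    intro j hj N
    have hj' : (0 : ℝ) < B - j := by
      have : (j : ℝ) < B := by exact_mod_cast hj
      linarith
    have hB' : (0 : ℝ) < B := by exact_mod_cast hB
    induction N with
    | zero => simp [seen]
    | succ N ih =>
      rw [Finset.sum_range_succ, ih]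
      have := step hB μ hIndep hUnif N j
      rw [this]
      field_simp
      ring
  have hsum : ∀ j, j < B → Summable (fun n => μ.real {ω | (seen n ω).card = j}) := by
    intro j hj
    refine summable_of_sum_range_le (c := (B : ℝ) / (B - j)) (fun n => measureReal_nonneg) ?_
    intro N
    rw [hpart j hj]
    have hj' : (0 : ℝ) < B - j := by
      have : (j : ℝ) < B := by exact_mod_cast hj
      linarith
    have : 0 ≤ (B : ℝ) / (B - j) := by positivity
    have h2 : 0 ≤ μ.real {ω | (seen N ω).card < j + 1} := measureReal_nonneg
    nlinarith
  intro j hj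
  rw [(hsum j hj).hasSum_iff_tendsto_nat]
  simp only [hpart j hj]
  have h0 : Filter.Tendsto (fun N => μ.real {ω | (seen N ω).card < j + 1}) Filter.atTop
      (nhds 0) := by
    simp only [lt_eq_sum]
    have := tendsto_finsetSum (f := fun i n => μ.real {ω | (seen n ω).card = i})
      (a := fun _ => (0 : ℝ)) (x := Filter.atTop) (Finset.range (j + 1)) (fun i hi =>
        (hsum i (by have := Finset.mem_range.1 hi; omega)).tendsto_atTop_zero)
    simpa using this
  have := (h0.const_sub 1).mul_const ((B : ℝ) / (B - j))
  simpa using this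

lemma hasSum_seen_lt {B : ℕ} (hB : 0 < B) (μ : Measure (ℕ → Fin B)) [IsProbabilityMeasure μ]
    (hIndep : iIndepFun (fun i (ω : ℕ → Fin B) => ω i) μ)
    (hUnif : ∀ i : ℕ, μ.map (fun ω => ω i) = uniformFin B) (m : ℕ) (hm : m ≤ B) :
    HasSum (fun n => μ.real {ω | (seen n ω).card < m})
      (∑ j ∈ Finset.range m, (B : ℝ) / (B - j)) := by
  simp only [lt_eq_sum]
  exact hasSum_sum fun j hj => hasSum_card hB μ hIndep hUnif j
    ((Finset.mem_range.1 hj).trans_le hm)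

lemma collectTime_eq {B K : ℕ} (ω : ℕ → Fin B) (h : ∃ n, B - K ≤ (seen n ω).card) :
    ∑' n, Set.indicator {ω : ℕ → Fin B | (seen n ω).card < B - K} (fun _ => (1 : ℝ≥0∞)) ω =
      (collectTime B K ω : ℝ≥0∞) := by
  have hlt : ∀ n, (seen n ω).card < B - K ↔ n < collectTime B K ω := by
    intro n
    constructor
    · intro hn
      by_contra! hc
      have h1 : B - K ≤ (seen (collectTime B K ω) ω).card :=
        Nat.sInf_mem (s := {n | B - K ≤ (seen n ω).card}) h
      have h2 := Finset.card_le_card (seen_mono ω hc)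
      omega
    · intro hn
      have := Nat.notMem_of_lt_sInf hn
      exact not_le.1 this
  rw [tsum_eq_sum (s := Finset.range (collectTime B K ω))]
  · rw [Finset.sum_congr rfl (g := fun _ => (1 : ℝ≥0∞))]
    · simp
    · intro n hn
      simp [Set.indicator, hlt, Finset.mem_range.1 hn]
  · intro n hn
    have : ¬ n < collectTime B K ω := by simpa using hn
    simp only [Set.indicator, Set.mem_ofPred_eq, hlt, this, if_false]

lemma harmonic_sum (B K : ℕ) (hK : 1 ≤ K) (hKB : K ≤ B) :
    ∑ j ∈ Finset.range (B - K), (B : ℝ) / (B - j) = B * (H B - H K) := by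
  have key : ∀ m, m ≤ B → ∑ j ∈ Finset.range m, (1 : ℝ) / (B - j) = H B - H (B - m) := by
    intro m
    induction m with
    | zero => simp
    | succ m ih =>
      intro hm
      rw [Finset.sum_range_succ, ih (by omega)]
      have h1 : B - m = (B - (m + 1)) + 1 := by omega
      have h2 : H (B - m) = H (B - (m + 1)) + 1 / ((B : ℝ) - m) := by
        rw [h1, H, Finset.sum_Icc_succ_top (by omega), ← H, ← h1, Nat.cast_sub (by omega)]
      rw [h2]
      ring
  have h := key (B - K) (by omega)
  rw [Nat.sub_sub_self hKB] at h
  rw [← h, Finset.mul_sum]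
  refine Finset.sum_congr rfl fun j _ => ?_
  ring

lemma expectation (B K : ℕ) (hK : 1 ≤ K) (hKB : K ≤ B)
    (μ : Measure (ℕ → Fin B)) [IsProbabilityMeasure μ]
    (hIndep : iIndepFun (fun i (ω : ℕ → Fin B) => ω i) μ)
    (hUnif : ∀ i : ℕ, μ.map (fun ω => ω i) = uniformFin B) :
    ∫ ω, (collectTime B K ω : ℝ) ∂μ = B * (H B - H K) := by
  have hB : 0 < B := by omega
  have hs := hasSum_seen_lt hB μ hIndep hUnif (B - K) (by omega)
  rw [← harmonic_sum B K hK hKB]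
  have hfin : ∀ᵐ ω ∂μ, ∃ n, B - K ≤ (seen n ω).card := by
    rw [ae_iff]
    have h1 : ∀ n, μ.real {ω | ¬ ∃ n, B - K ≤ (seen n ω).card} ≤
        μ.real {ω | (seen n ω).card < B - K} := by
      intro n
      refine measureReal_mono ?_
      intro ω hω
      simp only [Set.mem_ofPred_eq, not_exists, not_le] at hω ⊢
      exact hω n
    have h2 := ge_of_tendsto' hs.summable.tendsto_atTop_zero h1
    exact (measureReal_eq_zero_iff).1 (le_antisymm h2 measureReal_nonneg)
  set F : (ℕ → Fin B) → ℝ≥0∞ := fun ω =>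
    ∑' n, Set.indicator {ω : ℕ → Fin B | (seen n ω).card < B - K} (fun _ => (1 : ℝ≥0∞)) ω with hF
  have hmeas : ∀ n, MeasurableSet {ω : ℕ → Fin B | (seen n ω).card < B - K} := fun n =>
    measurableSet_seen n (fun s => s.card < B - K)
  have hind : ∀ n, Measurable (Set.indicator {ω : ℕ → Fin B | (seen n ω).card < B - K}
      (fun _ => (1 : ℝ≥0∞))) := fun n => measurable_const.indicator (hmeas n)
  have hFm : Measurable F := Measurable.ennreal_tsum hind
  have hFeq : ∀ᵐ ω ∂μ, F ω = (collectTime B K ω : ℝ≥0∞) := by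
    filter_upwards [hfin] with ω hω using collectTime_eq ω hω
  have h1 : ∫ ω, (collectTime B K ω : ℝ) ∂μ = ∫ ω, (F ω).toReal ∂μ := by
    refine integral_congr_ae ?_
    filter_upwards [hFeq] with ω hω
    simp [hω]
  rw [h1, integral_toReal hFm.aemeasurable (by filter_upwards [hFeq] with ω hω; simp [hω])]
  have h2 : ∫⁻ ω, F ω ∂μ = ∑' n, μ {ω | (seen n ω).card < B - K} := by
    rw [lintegral_tsum (fun n => (hind n).aemeasurable)]
    refine tsum_congr fun n => ?_
    rw [lintegral_indicator (hmeas n)]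
    simp
  rw [h2, ENNReal.tsum_toReal_eq (fun n => measure_ne_top _ _)]
  exact hs.tsum_eq

/-- **Coupon collector with replacement.** If `μ` is a probability measure on `ℕ → Fin B` under
which the draws are independent and uniform on the `B` coupons, and `1 ≤ K ≤ B`, then
`E[T_{B,K}] = B * (H(B) - H(K))`; consequently the mean number of cards obtained by a single
collector who buys until only `K` coupons are missing and then purchases those `K` missing coupons
directly is `B * (H(B) - H(K)) + K`, and the factor `f = (E[T_{B,K}] + K)/B` equals
`H(B) - H(K) + K/B`. -/
theorem coupon_collector_replacement_expectation
    (B K : ℕ) (hK : 1 ≤ K) (hKB : K ≤ B)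
    (μ : Measure (ℕ → Fin B)) [IsProbabilityMeasure μ]
    (hIndep : iIndepFun (fun i (ω : ℕ → Fin B) => ω i) μ)
    (hUnif : ∀ i : ℕ, μ.map (fun ω => ω i) = uniformFin B) :
    (∫ ω, (collectTime B K ω : ℝ) ∂μ = B * (H B - H K)) ∧
    ((∫ ω, (collectTime B K ω : ℝ) ∂μ) + K = B * (H B - H K) + K) ∧
    ((∫ ω, (collectTime B K ω : ℝ) ∂μ) + K) / B = H B - H K + K / B := by
  have h := expectation B K hK hKB μ hIndep hUnif
  have hB : (B : ℝ) ≠ 0 := by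
    have : 0 < B := by omega
    positivity
  refine ⟨h, by rw [h], ?_⟩
  rw [h]
  field_simp
end

section
/- In the coupon collector process with B distinct coupons and replacement parameter K with 1 ≤ K ≤ B, where coupons are drawn independently and uniformly at random, the variance of the stopping time T_{B,K} (the first time at least B − K distinct coupons have appeared) equals B²·(H₂(B) − H₂(K)) − B·(H(B) − H(K)). -/
open MeasureTheory ProbabilityTheory
open scoped ENNReal

/-- The `n`-th generalized harmonic number of order 2, `H₂(n) = ∑_{i=1}^n 1/i²`. -/
noncomputable def H2 (n : ℕ) : ℝ := ∑ i ∈ Finset.Icc 1 n, (1 : ℝ) / (i : ℝ) ^ 2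

lemma cc_hasSum_rec (x y : ℕ → ℝ) (q Y : ℝ) (hx : ∀ n, 0 ≤ x n)
    (hq1 : q < 1) (hy : ∀ n, 0 ≤ y n)
    (hrec : ∀ n, x (n + 1) = q * x n + y n) (hY : HasSum y Y) :
    HasSum x ((x 0 + Y) / (1 - q)) := by
  have hs : Summable x := by
    refine summable_of_sum_range_le (c := (x 0 + Y) / (1 - q)) hx fun N => ?_
    rw [le_div_iff₀ (by linarith)]
    have h1 : ∑ i ∈ Finset.range (N + 1), x i
        = q * ∑ i ∈ Finset.range N, x i + ∑ i ∈ Finset.range N, y i + x 0 := by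
      rw [Finset.sum_range_succ', Finset.mul_sum, ← Finset.sum_add_distrib]
      simp [hrec]
    have h2 := Finset.sum_range_succ x N
    have h3 := hx N
    have h4 : ∑ i ∈ Finset.range N, y i ≤ Y := sum_le_hasSum _ (fun i _ => hy i) hY
    nlinarith
  have h1 := hs.tsum_eq_zero_add
  have h2 : ∑' n, x (n + 1) = q * ∑' n, x n + Y := by
    simp_rw [hrec]
    rw [(hs.mul_left q).tsum_add hY.summable, tsum_mul_left, hY.tsum_eq]
  have h3 : ∑' n, x n = (x 0 + Y) / (1 - q) := by
    rw [eq_div_iff (by linarith)]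
    rw [h2] at h1
    linarith
  rw [← h3]
  exact hs.hasSum

/-- The set of coupons seen before time `n`. -/
def ccSeen {B : ℕ} (n : ℕ) (ω : ℕ → Fin B) : Finset (Fin B) :=
  Finset.image ω (Finset.range n)

lemma ccSeen_succ {B : ℕ} (n : ℕ) (ω : ℕ → Fin B) :
    ccSeen (n + 1) ω = insert (ω n) (ccSeen n ω) := by
  simp [ccSeen, Finset.range_add_one, Finset.image_insert]

lemma ccSeen_eq {B : ℕ} (n : ℕ) (ω : ℕ → Fin B) :
    ccSeen n ω = Finset.univ.image (fun i : Finset.range n => ω i) := by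
  ext a
  simp [ccSeen]

lemma ccSeen_meas {B : ℕ} (n : ℕ) (A : Set (Finset (Fin B))) :
    MeasurableSet {ω : ℕ → Fin B | ccSeen n ω ∈ A} := by
  simp_rw [ccSeen_eq]
  have hm : Measurable (fun (ω : ℕ → Fin B) (i : Finset.range n) => ω i) := by fun_prop
  exact hm (MeasurableSet.of_discrete
    (s := {v : Finset.range n → Fin B | Finset.univ.image v ∈ A}))

lemma cc_joint {B : ℕ} (μ : Measure (ℕ → Fin B)) [IsProbabilityMeasure μ]
    (hIndep : iIndepFun (fun i (ω : ℕ → Fin B) => ω i) μ)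
    (hUnif : ∀ i : ℕ, μ.map (fun ω => ω i) = uniformFin B)
    (n : ℕ) (s : Finset (Fin B)) (x : Fin B) :
    μ.real {ω | ccSeen n ω = s ∧ ω n = x} = μ.real {ω | ccSeen n ω = s} / B := by
  have h1 := hIndep.indepFun_finset (Finset.range n) {n} (by simp) (fun i => by fun_prop)
  have h2 := h1.measure_inter_preimage_eq_mul
    {v : Finset.range n → Fin B | Finset.univ.image v = s}
    {v : ({n} : Finset ℕ) → Fin B | v ⟨n, by simp⟩ = x}
    MeasurableSet.of_discrete MeasurableSet.of_discrete
  have h3 : μ {ω | ω n = x} = (B : ℝ≥0∞)⁻¹ := by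
    have : μ.map (fun ω => ω n) {x} = (B : ℝ≥0∞)⁻¹ := by
      rw [hUnif]; simp [uniformFin]
    rw [Measure.map_apply (by fun_prop) (by simp)] at this
    exact this
  have h4 : μ {ω | ccSeen n ω = s ∧ ω n = x} = μ {ω | ccSeen n ω = s} * (B : ℝ≥0∞)⁻¹ := by
    rw [← h3]
    simp_rw [ccSeen_eq]
    exact h2
  rw [measureReal_def, h4, ENNReal.toReal_mul, measureReal_def]
  simp [div_eq_mul_inv]

lemma cc_law {B : ℕ} (μ : Measure (ℕ → Fin B)) [IsProbabilityMeasure μ]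
    (n : ℕ) (A : Finset (Finset (Fin B))) :
    μ.real {ω | ccSeen n ω ∈ A} = ∑ s ∈ A, μ.real {ω | ccSeen n ω = s} := by
  have : {ω : ℕ → Fin B | ccSeen n ω ∈ A} = ⋃ s ∈ A, {ω | ccSeen n ω = s} := by
    ext ω; simp
  rw [this, measureReal_biUnion_finset]
  · intro s _ t _ hst
    refine Set.disjoint_left.2 fun ω h1 h2 => hst ?_
    exact h1.symm.trans h2
  · intro s _
    exact ccSeen_meas n {s}

/-- Law of the number of distinct coupons seen. -/
noncomputable def ccP {B : ℕ} (μ : Measure (ℕ → Fin B)) (n d : ℕ) : ℝ :=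
  μ.real {ω | (ccSeen n ω).card = d}

lemma ccP_eq {B : ℕ} (μ : Measure (ℕ → Fin B)) [IsProbabilityMeasure μ] (n d : ℕ) :
    ccP μ n d = ∑ s : Finset (Fin B), if s.card = d then μ.real {ω | ccSeen n ω = s} else 0 := by
  have := cc_law μ n (Finset.univ.filter (fun s => s.card = d))
  rw [Finset.sum_filter] at this
  rw [← this]
  simp [ccP]

lemma cc_count {B : ℕ} (s : Finset (Fin B)) (d : ℕ) :
    (∑ x : Fin B, if (insert x s).card = d + 1 then (1 : ℝ) else 0)
      = (if s.card = d + 1 then ((d : ℝ) + 1) else 0) + if s.card = d then ((B : ℝ) - d) else 0 := by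
  have h : ∀ x : Fin B, (if (insert x s).card = d + 1 then (1 : ℝ) else 0)
      = (if x ∈ s then (if s.card = d + 1 then (1 : ℝ) else 0) else 0)
        + (if x ∈ sᶜ then (if s.card = d then (1 : ℝ) else 0) else 0) := by
    intro x
    by_cases hx : x ∈ s
    · simp [hx]
    · simp [hx, Finset.card_insert_of_notMem hx]
  simp_rw [h]
  rw [Finset.sum_add_distrib, Finset.sum_ite_mem, Finset.sum_ite_mem]
  have hc : s.card ≤ B := by simpa using s.card_le_univ
  simp only [Finset.univ_inter, Finset.sum_const, Finset.card_compl, Fintype.card_fin,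
    nsmul_eq_mul, Nat.cast_sub hc]
  congr 1
  · split_ifs with h1
    · rw [h1]; push_cast; ring
    · simp
  · split_ifs with h1
    · rw [h1]; ring
    · simp

lemma ccP_succ {B : ℕ} (μ : Measure (ℕ → Fin B)) [IsProbabilityMeasure μ]
    (hIndep : iIndepFun (fun i (ω : ℕ → Fin B) => ω i) μ)
    (hUnif : ∀ i : ℕ, μ.map (fun ω => ω i) = uniformFin B) (n d : ℕ) :
    ccP μ (n + 1) (d + 1) = (d + 1) / B * ccP μ n (d + 1) + (B - d) / B * ccP μ n d := by
  have h1 : ccP μ (n + 1) (d + 1) = ∑ z ∈ (Finset.univ : Finset (Finset (Fin B) × Fin B)).filter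
      (fun z => (insert z.2 z.1).card = d + 1), μ.real {ω | ccSeen n ω = z.1 ∧ ω n = z.2} := by
    rw [ccP, ← measureReal_biUnion_finset]
    · congr 1
      ext ω
      simp [ccSeen_succ]
    · rintro ⟨s, x⟩ _ ⟨t, y⟩ _ hst
      refine Set.disjoint_left.2 fun ω h1 h2 => hst ?_
      exact Prod.ext (h1.1.symm.trans h2.1) (h1.2.symm.trans h2.2)
    · intro z _
      have hz : MeasurableSet {ω : ℕ → Fin B | ω n = z.2} :=
        (measurable_pi_apply (X := fun _ : ℕ => Fin B) n) (measurableSet_singleton z.2)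
      exact (ccSeen_meas n {z.1}).inter hz
  rw [h1, Finset.sum_filter, Fintype.sum_prod_type, ccP_eq, ccP_eq, Finset.mul_sum,
    Finset.mul_sum, ← Finset.sum_add_distrib]
  refine Finset.sum_congr rfl fun s _ => ?_
  have h2 := congrArg (fun t => t * (μ.real {ω | ccSeen n ω = s} / B)) (cc_count s d)
  simp only [Finset.sum_mul] at h2
  simp_rw [cc_joint μ hIndep hUnif]
  refine Eq.trans (Finset.sum_congr rfl fun x _ => ?_) (h2.trans ?_)
  · split_ifs <;> simp
  · split_ifs <;> ring

lemma ccP_zero {B : ℕ} (μ : Measure (ℕ → Fin B)) [IsProbabilityMeasure μ] (d : ℕ) :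
    ccP μ 0 d = if d = 0 then 1 else 0 := by
  rcases d with _ | d <;> simp [ccP, ccSeen]

lemma ccP_succ_zero {B : ℕ} (μ : Measure (ℕ → Fin B)) [IsProbabilityMeasure μ] (n : ℕ) :
    ccP μ (n + 1) 0 = 0 := by
  simp [ccP, ccSeen]

lemma ccP_nonneg {B : ℕ} (μ : Measure (ℕ → Fin B)) (n d : ℕ) : 0 ≤ ccP μ n d :=
  measureReal_nonneg

lemma ccP_hasSum {B : ℕ} (μ : Measure (ℕ → Fin B)) [IsProbabilityMeasure μ]
    (hIndep : iIndepFun (fun i (ω : ℕ → Fin B) => ω i) μ)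
    (hUnif : ∀ i : ℕ, μ.map (fun ω => ω i) = uniformFin B) (d : ℕ) (hd : d < B) :
    HasSum (fun n => ccP μ n d) ((B : ℝ) / (B - d)) ∧
    HasSum (fun n : ℕ => (n : ℝ) * ccP μ n d)
      ((B : ℝ) ^ 2 / (B - d) * ∑ i ∈ Finset.range d, 1 / ((B : ℝ) - (i + 1))) := by
  induction d with
  | zero =>
    have hB : (B : ℝ) ≠ 0 := by positivity
    constructor
    · have := hasSum_single (f := fun n => ccP μ n 0) 0 (by
        rintro (_ | n) h
        · simp at h
        · exact ccP_succ_zero μ n)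
      simpa [ccP_zero, hB] using this
    · have : (fun n : ℕ => (n : ℝ) * ccP μ n 0) = fun _ => 0 := by
        ext n
        rcases n with _ | n
        · simp
        · simp [ccP_succ_zero]
      rw [this]
      simpa using (hasSum_zero : HasSum (fun _ : ℕ => (0 : ℝ)) 0)
  | succ d ih =>
    obtain ⟨i1, i2⟩ := ih (by omega)
    have hB : (0 : ℝ) < B := by have : 0 < B := by omega
                                exact_mod_cast this
    have hd' : (d : ℝ) + 1 < B := by exact_mod_cast hd
    have hne : (B : ℝ) - (d + 1) ≠ 0 := by linarith
    have hne2 : (B : ℝ) - d ≠ 0 := by linarith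
    have hq : ((d : ℝ) + 1) / B < 1 := by rw [div_lt_one hB]; exact hd'
    have hc : 0 ≤ ((B : ℝ) - d) / B := div_nonneg (by linarith) hB.le
    have s1 := cc_hasSum_rec (fun n => ccP μ n (d + 1)) (fun n => (B - d) / B * ccP μ n d)
      ((d + 1) / B) _ (fun n => ccP_nonneg μ n _) hq
      (fun n => mul_nonneg hc (ccP_nonneg μ n _))
      (fun n => ccP_succ μ hIndep hUnif n d) (i1.mul_left _)
    have e1 : (ccP μ 0 (d + 1) + ((B : ℝ) - d) / B * (B / (B - d))) / (1 - (d + 1) / B)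
        = (B : ℝ) / (B - ((d + 1 : ℕ) : ℝ)) := by
      have : (1 - ((d : ℝ) + 1) / B) = (B - (d + 1)) / B := by field_simp
      rw [ccP_zero, this]
      push_cast
      simp
      field_simp
    rw [e1] at s1
    refine ⟨s1, ?_⟩
    have s2 := cc_hasSum_rec (fun n : ℕ => (n : ℝ) * ccP μ n (d + 1))
      (fun n => (d + 1) / B * ccP μ n (d + 1) +
        ((B - d) / B * ((n : ℝ) * ccP μ n d) + (B - d) / B * ccP μ n d))
      ((d + 1) / B) _ (fun n => mul_nonneg (by positivity) (ccP_nonneg μ n _)) hq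
      (fun n => by
        have := ccP_nonneg μ n d
        have := ccP_nonneg μ n (d + 1)
        positivity)
      (fun n => by
        simp only [ccP_succ μ hIndep hUnif n d]
        push_cast
        ring) ((s1.mul_left _).add ((i2.mul_left _).add (i1.mul_left _)))
    convert s2 using 1
    have : (1 - ((d : ℝ) + 1) / B) = (B - (d + 1)) / B := by field_simp
    rw [this, Finset.sum_range_succ]
    push_cast
    generalize ∑ i ∈ Finset.range d, 1 / ((B : ℝ) - (i + 1)) = S
    field_simp
    ring

lemma ccSeen_mono {B : ℕ} (ω : ℕ → Fin B) {a b : ℕ} (h : a ≤ b) :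
    (ccSeen a ω).card ≤ (ccSeen b ω).card :=
  Finset.card_le_card (Finset.image_subset_image (Finset.range_mono h))

lemma cc_lt_meas {B : ℕ} (n m : ℕ) :
    MeasurableSet {ω : ℕ → Fin B | (ccSeen n ω).card < m} :=
  ccSeen_meas n {s | s.card < m}

lemma cc_lt_real {B : ℕ} (μ : Measure (ℕ → Fin B)) [IsProbabilityMeasure μ] (n m : ℕ) :
    μ.real {ω | (ccSeen n ω).card < m} = ∑ d ∈ Finset.range m, ccP μ n d := by
  have : {ω : ℕ → Fin B | (ccSeen n ω).card < m}
      = ⋃ d ∈ Finset.range m, {ω | (ccSeen n ω).card = d} := by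
    ext ω; simp
  rw [this, measureReal_biUnion_finset]
  · rfl
  · intro s _ t _ hst
    refine Set.disjoint_left.2 fun ω h1 h2 => hst ?_
    exact h1.symm.trans h2
  · intro s _
    exact ccSeen_meas n {t | t.card = s}

lemma cc_moment {Ω : Type*} [MeasurableSpace Ω] (μ : Measure Ω) [IsProbabilityMeasure μ]
    (A : ℕ → Set Ω) (hA : ∀ n, MeasurableSet (A n)) (T : Ω → ℕ)
    (hT : ∀ᵐ ω ∂μ, ∀ n, ω ∈ A n ↔ n < T ω) (c : ℕ → ℝ) (hc : ∀ n, 0 ≤ c n) (S : ℝ)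
    (hS : HasSum (fun n => c n * μ.real (A n)) S) :
    Integrable (fun ω => ∑ i ∈ Finset.range (T ω), c i) μ ∧
      ∫ ω, ∑ i ∈ Finset.range (T ω), c i ∂μ = S := by
  have hpt : ∀ᵐ ω ∂μ, HasSum (fun n => (A n).indicator (fun _ => c n) ω)
      (∑ i ∈ Finset.range (T ω), c i) := by
    filter_upwards [hT] with ω h
    have h1 : ∑ i ∈ Finset.range (T ω), c i
        = ∑ i ∈ Finset.range (T ω), (A i).indicator (fun _ => c i) ω := by
      refine Finset.sum_congr rfl fun i hi => ?_
      rw [Set.indicator_of_mem ((h i).2 (Finset.mem_range.1 hi))]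
    rw [h1]
    refine hasSum_sum_of_ne_finset_zero fun n hn => ?_
    rw [Set.indicator_of_notMem]
    rw [h n]
    simpa using hn
  have hlin : ∫⁻ ω, ENNReal.ofReal (∑ i ∈ Finset.range (T ω), c i) ∂μ = ENNReal.ofReal S := by
    have : ∀ᵐ ω ∂μ, ENNReal.ofReal (∑ i ∈ Finset.range (T ω), c i)
        = ∑' n, (A n).indicator (fun _ => ENNReal.ofReal (c n)) ω := by
      filter_upwards [hpt] with ω h
      rw [← h.tsum_eq, ENNReal.ofReal_tsum_of_nonneg
        (fun n => Set.indicator_nonneg (fun _ _ => hc n) _) h.summable]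
      congr 1
      ext n
      by_cases hn : ω ∈ A n <;> simp [hn]
    rw [lintegral_congr_ae this, lintegral_tsum
      (fun n => (measurable_const.indicator (hA n)).aemeasurable), ← hS.tsum_eq,
      ENNReal.ofReal_tsum_of_nonneg (fun n => mul_nonneg (hc n) measureReal_nonneg) hS.summable]
    congr 1
    ext n
    rw [lintegral_indicator_const (hA n), ENNReal.ofReal_mul (hc n), ofReal_measureReal]
  have hnn : ∀ ω, 0 ≤ ∑ i ∈ Finset.range (T ω), c i := fun ω => Finset.sum_nonneg fun i _ => hc i
  have hmeas : AEStronglyMeasurable (fun ω => ∑ i ∈ Finset.range (T ω), c i) μ := by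
    refine (aemeasurable_of_tendsto_metrizable_ae (u := Filter.atTop)
      (f := fun N ω => ∑ n ∈ Finset.range N, (A n).indicator (fun _ => c n) ω) ?_ ?_)
      |>.aestronglyMeasurable
    · intro N
      exact (Finset.measurable_sum _
        (fun n _ => measurable_const.indicator (hA n))).aemeasurable
    · filter_upwards [hpt] with ω h
      exact h.tendsto_sum_nat
  have hS0 : 0 ≤ S := hS.nonneg fun n => mul_nonneg (hc n) measureReal_nonneg
  constructor
  · refine ⟨hmeas, ?_⟩
    rw [hasFiniteIntegral_iff_ofReal (Filter.Eventually.of_forall hnn), hlin]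
    exact ENNReal.ofReal_lt_top
  · rw [integral_eq_lintegral_of_nonneg_ae (Filter.Eventually.of_forall hnn) hmeas, hlin,
      ENNReal.toReal_ofReal hS0]

lemma cc_algebra (B m : ℕ) (hm : m ≤ B) :
    (∑ d ∈ Finset.range m, (2 * ((B : ℝ) ^ 2 / (B - d) *
        ∑ i ∈ Finset.range d, 1 / ((B : ℝ) - (i + 1))) + (B : ℝ) / (B - d)))
      - (∑ d ∈ Finset.range m, (B : ℝ) / (B - d)) ^ 2
      = (B : ℝ) ^ 2 * (H2 B - H2 (B - m)) - B * (H B - H (B - m)) := by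
  induction m with
  | zero => simp
  | succ m ih =>
    have ih := ih (by omega)
    have hm' : (m : ℝ) + 1 ≤ B := by exact_mod_cast hm
    have hB : (B : ℝ) ≠ 0 := by
      have : (0 : ℝ) ≤ m := by positivity
      linarith
    have hne : (B : ℝ) - m ≠ 0 := by linarith
    obtain ⟨k, hk⟩ : ∃ k, B = m + 1 + k := ⟨B - (m + 1), by omega⟩
    have e1 : B - m = k + 1 := by omega
    have e2 : B - (m + 1) = k := by omega
    have e3 : ((k + 1 : ℕ) : ℝ) = B - m := by rw [hk]; push_cast; ring
    have hH : H (k + 1) = H k + 1 / (B - m) := by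
      rw [H, Finset.sum_Icc_succ_top (by omega), e3]; rfl
    have hH2 : H2 (k + 1) = H2 k + 1 / (B - m) ^ 2 := by
      rw [H2, Finset.sum_Icc_succ_top (by omega), e3]; rfl
    rw [e1, hH, hH2] at ih
    rw [e2, Finset.sum_range_succ, Finset.sum_range_succ (fun d : ℕ => (B : ℝ) / (B - d))]
    have hS : ∑ d ∈ Finset.range m, (B : ℝ) / (B - d)
        = B * (∑ i ∈ Finset.range m, 1 / ((B : ℝ) - (i + 1)) + 1 / B - 1 / (B - m)) := by
      have h1 := Finset.sum_range_succ (fun i : ℕ => 1 / ((B : ℝ) - i)) m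
      rw [Finset.sum_range_succ'] at h1
      have h2 : ∑ d ∈ Finset.range m, (B : ℝ) / (B - d)
        = B * ∑ d ∈ Finset.range m, 1 / ((B : ℝ) - d) := by
        rw [Finset.mul_sum]
        exact Finset.sum_congr rfl fun i _ => by ring
      rw [h2]
      push_cast at h1
      congr 1
      simp only [sub_zero] at h1
      linarith
    rw [hS] at ih ⊢
    generalize ∑ i ∈ Finset.range m, 1 / ((B : ℝ) - (i + 1)) = S at ih ⊢
    have hQ := eq_add_of_sub_eq ih
    rw [hQ]
    field_simp
    ring

/-- **Variance of the coupon collector with replacement.** If `μ` is a probability measure on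
`ℕ → Fin B` under which the draws are independent and uniform on the `B` coupons, and
`1 ≤ K ≤ B`, then `Var[T_{B,K}] = B² * (H₂(B) - H₂(K)) - B * (H(B) - H(K))`. -/
theorem coupon_collector_replacement_variance
    (B K : ℕ) (hK : 1 ≤ K) (hKB : K ≤ B)
    (μ : Measure (ℕ → Fin B)) [IsProbabilityMeasure μ]
    (hIndep : iIndepFun (fun i (ω : ℕ → Fin B) => ω i) μ)
    (hUnif : ∀ i : ℕ, μ.map (fun ω => ω i) = uniformFin B) :
    variance (fun ω => (collectTime B K ω : ℝ)) μ
      = (B : ℝ) ^ 2 * (H2 B - H2 K) - B * (H B - H K) := by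
  set m := B - K with hm
  have hmB : m ≤ B := by omega
  set T : (ℕ → Fin B) → ℕ := collectTime B K with hTdef
  let A : ℕ → Set (ℕ → Fin B) := fun n => {ω | (ccSeen n ω).card < m}
  have hA : ∀ n, MeasurableSet (A n) := fun n => cc_lt_meas n m
  have hp := fun d (hd : d ∈ Finset.range m) =>
    ccP_hasSum μ hIndep hUnif d (by have := Finset.mem_range.1 hd; omega)
  have hs1 : HasSum (fun n => (1 : ℝ) * μ.real (A n))
      (∑ d ∈ Finset.range m, (B : ℝ) / (B - d)) := by
    have := hasSum_sum fun d hd => (hp d hd).1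
    convert this using 2 with n
    rw [one_mul]
    exact cc_lt_real μ n m
  have hs2 : HasSum (fun n : ℕ => (2 * (n : ℝ) + 1) * μ.real (A n))
      (∑ d ∈ Finset.range m, (2 * ((B : ℝ) ^ 2 / (B - d) *
        ∑ i ∈ Finset.range d, 1 / ((B : ℝ) - (i + 1))) + (B : ℝ) / (B - d))) := by
    have := hasSum_sum fun d hd => ((hp d hd).2.mul_left 2).add (hp d hd).1
    refine Eq.subst (motive := fun f => HasSum f _) (funext fun n => ?_) this
    symm
    rw [show μ.real (A n) = _ from cc_lt_real μ n m, Finset.mul_sum]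
    exact Finset.sum_congr rfl fun i _ => by ring
  have hnull : μ.real (⋂ n, A n) = 0 := by
    have h0 : Filter.Tendsto (fun n => μ.real (A n)) Filter.atTop (nhds 0) := by
      simpa using hs1.summable.tendsto_atTop_zero
    refine le_antisymm (ge_of_tendsto' h0 fun n => ?_) measureReal_nonneg
    exact measureReal_mono (Set.iInter_subset _ n)
  have hT : ∀ᵐ ω ∂μ, ∀ n, ω ∈ A n ↔ n < T ω := by
    have h0 : μ (⋂ n, A n) = 0 := by
      rwa [measureReal_eq_zero_iff] at hnull
    have h1 : ∀ᵐ ω ∂μ, ω ∉ ⋂ n, A n := measure_eq_zero_iff_ae_notMem.1 h0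
    filter_upwards [h1] with ω h n
    have hne : {n : ℕ | B - K ≤ (Finset.image ω (Finset.range n)).card}.Nonempty := by
      simp only [Set.mem_iInter, not_forall] at h
      obtain ⟨k, hk⟩ := h
      have hk' : ¬ (ccSeen k ω).card < m := hk
      exact ⟨k, show m ≤ (ccSeen k ω).card from not_lt.1 hk'⟩
    have hmem : m ≤ (ccSeen (T ω) ω).card := Nat.sInf_mem hne
    constructor
    · intro h2
      by_contra h3
      have := ccSeen_mono ω (not_lt.1 h3)
      have h2' : (ccSeen n ω).card < m := h2
      omega
    · intro h2
      have h3 : n ∉ {n : ℕ | B - K ≤ (Finset.image ω (Finset.range n)).card} :=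
        Nat.notMem_of_lt_sInf h2
      have h4 : ¬ m ≤ (ccSeen n ω).card := h3
      exact not_le.1 h4
  obtain ⟨j1, j2⟩ := cc_moment μ A hA T hT (fun _ => 1) (fun _ => zero_le_one) _ hs1
  obtain ⟨k1, k2⟩ := cc_moment μ A hA T hT (fun n : ℕ => 2 * (n : ℝ) + 1)
    (fun _ => by positivity) _ hs2
  have hsq : ∀ N : ℕ, ∑ i ∈ Finset.range N, (2 * (i : ℝ) + 1) = (N : ℝ) ^ 2 := by
    intro N
    induction N with
    | zero => simp
    | succ N ih => rw [Finset.sum_range_succ, ih]; push_cast; ring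
  simp only [Finset.sum_const, Finset.card_range, nsmul_eq_mul, mul_one] at j1 j2
  simp only [hsq] at k1 k2
  have hL : MemLp (fun ω => (T ω : ℝ)) 2 μ :=
    (memLp_two_iff_integrable_sq j1.aestronglyMeasurable).2 k1
  rw [variance_eq_sub hL]
  have e : (∫ ω, ((fun ω => (T ω : ℝ)) ^ 2) ω ∂μ) = _ := k2
  rw [e, j2, cc_algebra B m hmB, show B - m = K by omega]
end

section
/- Let α ∈ (0, 1) be a fixed real number and for each B ≥ 1 set K_B = ⌈α·B⌉. Then in the coupon collector process with B coupons and replacement parameter K_B, the normalized variance Var[T_{B,K_B}]/B converges to (1/α − 1) − ln(1/α) as B → ∞. In particular, the normalized standard deviation σ/√B of the number of cards a single collector must buy depends asymptotically only on the fraction α of purchasable replacement cards, not on the album size B. -/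
open MeasureTheory ProbabilityTheory Filter
open scoped ENNReal

lemma rec_hasSum (a b : ℕ → ℝ) (r β : ℝ) (hr0 : 0 ≤ r) (hr1 : r < 1) (ha : ∀ n, 0 ≤ a n)
    (hb : ∀ n, 0 ≤ b n) (hbs : HasSum b β) (h : ∀ n, a (n+1) = r * a n + b n) :
    HasSum a ((a 0 + β) / (1 - r)) := by
  have h1 : 0 < 1 - r := by linarith
  have hs : Summable a := by
    refine summable_of_sum_range_le (c := (a 0 + β) / (1 - r)) ha (fun N => ?_)
    rw [le_div_iff₀ h1]
    have e1 : ∑ n ∈ Finset.range (N+1), a n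
        = r * ∑ n ∈ Finset.range N, a n + ∑ n ∈ Finset.range N, b n + a 0 := by
      rw [Finset.sum_range_succ', Finset.mul_sum, ← Finset.sum_add_distrib]
      simp [h]
    have e2 := Finset.sum_range_succ a N
    have e3 : ∑ n ∈ Finset.range N, b n ≤ β := sum_le_hasSum _ (fun i _ => hb i) hbs
    have := ha N
    nlinarith
  have e := hs.hasSum
  have e1 : HasSum (fun n => a (n+1)) (r * (∑' n, a n) + β) := by
    simp only [h]
    exact (e.mul_left r).add hbs
  have e2 := (hasSum_nat_add_iff' 1).mpr e
  have e3 := e1.unique e2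
  simp at e3
  convert e using 1
  rw [div_eq_iff h1.ne']
  linarith

lemma chain_hasSum (B : ℕ) (p : ℕ → ℕ → ℝ) (hp : ∀ n j, 0 ≤ p n j)
    (h0 : p 0 0 = 1) (h0' : ∀ j, p 0 (j+1) = 0) (h1 : ∀ n, p (n+1) 0 = 0)
    (h2 : ∀ n j, j < B → p (n+1) (j+1) = p n (j+1) * ((j+1)/B) + p n j * ((B-j)/B))
    (j : ℕ) (hj : j < B) :
    HasSum (fun n => p n j) ((B:ℝ)/(B-j)) ∧
    HasSum (fun n : ℕ => (n:ℝ) * p n j)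
      ((B:ℝ)/(B-j) * ∑ i ∈ Finset.range j, (B:ℝ)/(B-(i+1:ℕ))) := by
  induction j with
  | zero =>
    have hB : (B:ℝ) ≠ 0 := by positivity
    constructor
    · convert hasSum_single 0 (f := fun n => p n 0) ?_ using 1
      · simp [h0, hB]
      · rintro (_|n) hn
        · exact absurd rfl hn
        · exact h1 n
    · convert hasSum_zero using 2 with n
      · rcases n with _|n <;> simp [h1]
      · simp
  | succ j ih =>
    obtain ⟨i1, i2⟩ := ih (by omega)
    have hB : (0:ℝ) < B := by
      have : 0 < B := by omega
      exact_mod_cast this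
    have hjB : (j:ℝ) + 1 < B := by exact_mod_cast hj
    have hr0 : (0:ℝ) ≤ (j+1)/B := by positivity
    have hr1 : ((j:ℝ)+1)/B < 1 := by rw [div_lt_one hB]; exact hjB
    have hs0 : (0:ℝ) ≤ (B-j)/B := div_nonneg (by linarith) hB.le
    have n1 : (B:ℝ) - j ≠ 0 := by linarith
    have n2 : (B:ℝ) - (j+1) ≠ 0 := by linarith
    have n3 : 1 - ((j:ℝ)+1)/B ≠ 0 := by linarith
    have A : HasSum (fun n => p n (j+1)) ((B:ℝ)/(B-(j+1:ℕ))) := by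
      convert rec_hasSum (fun n => p n (j+1)) (fun n => p n j * ((B-j)/B)) ((j+1)/B) _ hr0 hr1
        (fun n => hp _ _) (fun n => mul_nonneg (hp _ _) hs0) (i1.mul_right _) ?_ using 1
      · push_cast
        simp only [h0']
        field_simp
        ring
      · intro n
        simp only [h2 n j (by omega)]
        ring
    refine ⟨A, ?_⟩
    convert rec_hasSum (fun n : ℕ => (n:ℝ) * p n (j+1))
      (fun n => (p n (j+1) * ((j+1)/B) + ((n:ℝ) * p n j) * ((B-j)/B)) + p n j * ((B-j)/B))
        ((j+1)/B) _ hr0 hr1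
        (fun n => mul_nonneg (by positivity) (hp _ _)) (fun n => ?_)
        (((A.mul_right _).add (i2.mul_right _)).add (i1.mul_right _)) ?_ using 1
    · rw [Finset.sum_range_succ]
      generalize ∑ i ∈ Finset.range j, (B:ℝ)/(B-(i+1:ℕ)) = s
      push_cast
      field_simp
      ring
    · have := hp n j
      have := hp n (j+1)
      positivity
    · intro n
      simp only [h2 n j (by omega)]
      push_cast
      ring

lemma moments {Ω : Type*} [MeasurableSpace Ω] (μ : Measure Ω) [IsProbabilityMeasure μ]
    (A : ℕ → Set Ω) (hA : ∀ n, MeasurableSet (A n)) (T : Ω → ℕ)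
    (hT : ∀ ω, (∃ n, ω ∉ A n) → ∀ n, n < T ω ↔ ω ∈ A n) (x y : ℝ)
    (hx : HasSum (fun n => μ.real (A n)) x)
    (hy : HasSum (fun n : ℕ => (2 * (n:ℝ) + 1) * μ.real (A n)) y) :
    variance (fun ω => (T ω : ℝ)) μ = y - x ^ 2 := by
  have hae : ∀ᵐ ω ∂μ, ∃ n, ω ∉ A n := by
    have : μ.real (⋂ n, A n) = 0 := by
      refine le_antisymm (ge_of_tendsto' hx.summable.tendsto_atTop_zero (fun n => ?_))
        measureReal_nonneg
      exact measureReal_mono (Set.iInter_subset _ n)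
    rw [measureReal_eq_zero_iff] at this
    rw [ae_iff]
    convert this using 2
    ext ω; simp
  have key : ∀ (c : ℕ → ℝ) (z : ℝ), (∀ n, 0 ≤ c n) → HasSum (fun n => c n * μ.real (A n)) z →
      Integrable (fun ω => ∑ n ∈ Finset.range (T ω), c n) μ ∧
      ∫ ω, (∑ n ∈ Finset.range (T ω), c n) ∂μ = z := by
    intro c z hc hz
    have hI : ∀ n, Integrable ((A n).indicator (fun _ => c n)) μ :=
      fun n => (integrable_const _).indicator (hA n)
    have hint : ∀ n, ∫ ω, (A n).indicator (fun _ => c n) ω ∂μ = c n * μ.real (A n) := by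
      intro n
      rw [integral_indicator_const _ (hA n), smul_eq_mul, mul_comm]
    have hnorm : ∀ n ω, ‖(A n).indicator (fun _ => c n) ω‖ = (A n).indicator (fun _ => c n) ω := by
      intro n ω
      exact Real.norm_of_nonneg (Set.indicator_nonneg (fun _ _ => hc n) _)
    have hsum : Summable (fun n => ∫ ω, ‖(A n).indicator (fun _ => c n) ω‖ ∂μ) := by
      simp only [hnorm, hint]; exact hz.summable
    have e : (fun ω => ∑ n ∈ Finset.range (T ω), c n) =ᵐ[μ]
        fun ω => ∑' n, (A n).indicator (fun _ => c n) ω := by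
      filter_upwards [hae] with ω hω
      have := hT ω hω
      rw [tsum_eq_sum (s := Finset.range (T ω))]
      · refine Finset.sum_congr rfl (fun n hn => ?_)
        rw [Set.indicator_of_mem]
        exact (this n).1 (Finset.mem_range.1 hn)
      · intro n hn
        rw [Set.indicator_of_notMem]
        rwa [← this n, ← Finset.mem_range]
    have h1 := hasSum_integral_of_summable_integral_norm hI hsum
    refine ⟨?_, ?_⟩
    · rw [integrable_congr e]
      have hmeas : AEMeasurable (fun ω => ∑' n, (A n).indicator (fun _ => c n) ω) μ :=
        AEMeasurable.tsum (fun n => (hI n).aemeasurable)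
      refine ⟨hmeas.aestronglyMeasurable, ?_⟩
      have hle : ∫⁻ ω, ‖∑' n, (A n).indicator (fun _ => c n) ω‖ₑ ∂μ ≤
          ∑' n, ∫⁻ ω, ‖(A n).indicator (fun _ => c n) ω‖ₑ ∂μ := by
        rw [← lintegral_tsum (fun n => (hI n).aestronglyMeasurable.enorm)]
        exact lintegral_mono (fun ω => enorm_tsum_le_tsum_enorm)
      refine lt_of_le_of_lt hle ?_
      have heq : ∀ n, ∫⁻ ω, ‖(A n).indicator (fun _ => c n) ω‖ₑ ∂μ
          = ENNReal.ofReal (c n * μ.real (A n)) := by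
        intro n
        rw [← hint n, ← ofReal_integral_norm_eq_lintegral_enorm (hI n)]
        simp only [hnorm]
      simp only [heq]
      rw [← ENNReal.ofReal_tsum_of_nonneg
        (fun n => mul_nonneg (hc n) measureReal_nonneg) hz.summable]
      exact ENNReal.ofReal_lt_top
    · rw [integral_congr_ae e]
      simp only [hint] at h1
      exact h1.unique hz
  obtain ⟨a1, a2⟩ := key (fun _ => 1) x (by simp) (by simpa using hx)
  obtain ⟨b1, b2⟩ := key (fun n => 2 * n + 1) y (fun n => by positivity) hy
  have sq : ∀ N : ℕ, ∑ n ∈ Finset.range N, (2 * (n:ℝ) + 1) = (N:ℝ)^2 := by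
    intro N
    induction N with
    | zero => simp
    | succ N ih => rw [Finset.sum_range_succ, ih]; push_cast; ring
  simp only [sq] at b1 b2
  simp at a1 a2
  rw [variance_eq_sub ((memLp_two_iff_integrable_sq a1.aestronglyMeasurable).2 b1), a2]
  simp only [Pi.pow_apply, b2]

lemma alg (g : ℕ → ℝ) (h : g 0 = 1) (m : ℕ) :
    (∑ j ∈ Finset.range m, (2 * (g j * ∑ i ∈ Finset.range j, g (i+1)) + g j))
      - (∑ j ∈ Finset.range m, g j)^2 = ∑ j ∈ Finset.range m, (g j ^ 2 - g j) := by
  have hh : ∀ j, ∑ i ∈ Finset.range j, g (i+1) = ∑ i ∈ Finset.range j, g i + g j - 1 := by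
    intro j
    have := Finset.sum_range_succ g j
    have := Finset.sum_range_succ' g j
    linarith
  simp only [hh]
  induction m with
  | zero => simp
  | succ m ih =>
    rw [Finset.sum_range_succ, Finset.sum_range_succ, Finset.sum_range_succ (fun j => g j ^ 2 - g j), ← ih]
    ring

lemma step_prob (B : ℕ) (μ : Measure (ℕ → Fin B)) [IsProbabilityMeasure μ] (hB : 1 ≤ B)
    (hI : iIndepFun (fun i (ω : ℕ → Fin B) => ω i) μ)
    (hU : ∀ i : ℕ, μ.map (fun ω => ω i) = uniformFin B) (n j : ℕ) (hj : j < B) :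
    μ.real {ω | (Finset.image ω (Finset.range (n+1))).card = j + 1}
      = μ.real {ω | (Finset.image ω (Finset.range n)).card = j + 1} * ((j+1)/B)
      + μ.real {ω | (Finset.image ω (Finset.range n)).card = j} * ((B-j)/B) := by
  classical
  letI : MeasurableSpace (Finset (Fin B)) := ⊤
  have hD : Measurable (fun ω : ℕ → Fin B => Finset.image ω (Finset.range n)) := by
    have : (fun ω : ℕ → Fin B => Finset.image ω (Finset.range n)) =
      (fun f : (Finset.range n → Fin B) => Finset.image f Finset.univ) ∘
        (fun ω i => ω i) := by
      funext ω
      ext x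
      simp
    rw [this]
    exact (measurable_of_finite _).comp (by fun_prop)
  have hind : IndepFun (fun ω : ℕ → Fin B => Finset.image ω (Finset.range n))
      (fun ω => ω n) μ := by
    have h := hI.indepFun_finset (Finset.range n) {n} (by simp) (fun i => by fun_prop)
    have hev : Measurable (fun f : (({n} : Finset ℕ) → Fin B) =>
        f ⟨n, Finset.mem_singleton_self n⟩) := measurable_pi_apply _
    have h2 := h.comp (φ := fun f : (Finset.range n → Fin B) => Finset.image f Finset.univ)
      (ψ := fun f : (({n} : Finset ℕ) → Fin B) => f ⟨n, Finset.mem_singleton_self n⟩)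
      (measurable_of_finite _) hev
    convert h2 using 1
    · funext ω
      ext x
      simp
    · rfl
  have hP : ∀ (S : Finset (Fin B)) (V : Finset (Fin B)),
      μ.real {ω | Finset.image ω (Finset.range n) = S ∧ ω n ∈ V} =
      μ.real {ω | Finset.image ω (Finset.range n) = S} * (V.card / B) := by
    intro S V
    have h := hind.measure_inter_preimage_eq_mul {S} (V : Set (Fin B)) trivial
      (Set.toFinite _).measurableSet
    have h3 : μ ((fun ω : ℕ → Fin B => ω n) ⁻¹' V) = (B:ℝ≥0∞)⁻¹ * V.card := by
      rw [← Measure.map_apply (by fun_prop) (Set.toFinite _).measurableSet, hU, uniformFin]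
      simp [Measure.count_apply_finset]
    rw [h3] at h
    have h4 := congrArg ENNReal.toReal h
    simp only [ENNReal.toReal_mul, ENNReal.toReal_inv, ENNReal.toReal_natCast] at h4
    rw [div_eq_inv_mul]
    exact h4
  have hm' : ∀ (S : Finset (Fin B)),
      MeasurableSet {ω : ℕ → Fin B | Finset.image ω (Finset.range n) = S} := by
    intro S
    exact (hD (t := {S}) trivial)
  have hm : ∀ (S V : Finset (Fin B)),
      MeasurableSet {ω : ℕ → Fin B | Finset.image ω (Finset.range n) = S ∧ ω n ∈ V} := by
    intro S V
    have e1 : MeasurableSet ((fun ω : ℕ → Fin B => ω n) ⁻¹' (V : Set (Fin B))) :=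
      (measurable_pi_apply n) (Set.toFinite (V : Set (Fin B))).measurableSet
    exact (hm' S).inter e1
  have hp : ∀ k, μ.real {ω | (Finset.image ω (Finset.range n)).card = k} =
      ∑ S : Finset (Fin B), if S.card = k then
        μ.real {ω | Finset.image ω (Finset.range n) = S} else 0 := by
    intro k
    rw [← Finset.sum_filter, ← measureReal_biUnion_finset]
    · congr 1
      ext ω
      simp
    · intro S _ S' _ hne
      refine Set.disjoint_left.2 (fun ω h h' => hne (h.symm.trans h'))
    · intro S _
      exact hm' S
  have hq : μ.real {ω | (Finset.image ω (Finset.range (n+1))).card = j + 1} =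
      ∑ S : Finset (Fin B), μ.real {ω | Finset.image ω (Finset.range n) = S ∧
        ω n ∈ Finset.univ.filter (fun x => (insert x S).card = j + 1)} := by
    rw [← measureReal_biUnion_finset]
    · congr 1
      ext ω
      simp [Finset.range_add_one, Finset.image_insert]
    · intro S _ S' _ hne
      refine Set.disjoint_left.2 (fun ω h h' => hne (h.1.symm.trans h'.1))
    · intro S _
      exact hm S _
  rw [hq, hp, hp, Finset.sum_mul, Finset.sum_mul, ← Finset.sum_add_distrib]
  refine Finset.sum_congr rfl (fun S _ => ?_)
  rw [hP]
  rcases eq_or_ne S.card (j+1) with h | h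
  · have : Finset.univ.filter (fun x => (insert x S).card = j + 1) = S := by
      ext x
      by_cases hx : x ∈ S <;> simp [hx, h]
    rw [this, h]
    simp
  · rcases eq_or_ne S.card j with h' | h'
    · have : Finset.univ.filter (fun x => (insert x S).card = j + 1) = Sᶜ := by
        ext x
        by_cases hx : x ∈ S <;> simp [hx, h']
      rw [this, Finset.card_compl, h', Fintype.card_fin, Nat.cast_sub hj.le]
      simp
    · have : Finset.univ.filter (fun x => (insert x S).card = j + 1) = ∅ := by
        ext x
        by_cases hx : x ∈ S <;> simp [hx, h, h']
      rw [this]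
      simp [h, h']

lemma var_formula (B K : ℕ) (μ : Measure (ℕ → Fin B)) [IsProbabilityMeasure μ] (hB : 1 ≤ B)
    (hK : 1 ≤ K)
    (hI : iIndepFun (fun i (ω : ℕ → Fin B) => ω i) μ)
    (hU : ∀ i : ℕ, μ.map (fun ω => ω i) = uniformFin B) :
    variance (fun ω => (collectTime B K ω : ℝ)) μ =
      ∑ j ∈ Finset.range (B - K), (((B:ℝ)/(B-j))^2 - (B:ℝ)/(B-j)) := by
  classical
  have hB' : (B:ℝ) ≠ 0 := by positivity
  set p : ℕ → ℕ → ℝ := fun n j => μ.real {ω | (Finset.image ω (Finset.range n)).card = j} with hp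
  have hch := fun j hj => chain_hasSum B p (fun n j => measureReal_nonneg)
    (by simp [hp]) (by simp [hp])
    (by simp [hp, Finset.range_add_one]) (fun n j hj => step_prob B μ hB hI hU n j hj) j hj
  have hcm : ∀ n, Measurable (fun ω : ℕ → Fin B => (Finset.image ω (Finset.range n)).card) := by
    intro n
    have : (fun ω : ℕ → Fin B => (Finset.image ω (Finset.range n)).card) =
      (fun f : (Finset.range n → Fin B) => (Finset.image f Finset.univ).card) ∘
        (fun ω i => ω i) := by
      funext ω
      simp only [Function.comp]
      congr 1
      ext x
      simp
    rw [this]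
    exact (measurable_of_finite _).comp (by fun_prop)
  have hA : ∀ n, μ.real {ω | (Finset.image ω (Finset.range n)).card < B - K}
      = ∑ j ∈ Finset.range (B - K), p n j := by
    intro n
    rw [← measureReal_biUnion_finset]
    · congr 1
      ext ω
      simp
    · intro S _ S' _ hne
      refine Set.disjoint_left.2 (fun ω h h' => hne (h.symm.trans h'))
    · intro j _
      exact hcm n (measurableSet_singleton j)
  have hlt : ∀ j ∈ Finset.range (B-K), j < B := fun j hj => by
    have := Finset.mem_range.1 hj; omega
  rw [moments μ (fun n => {ω | (Finset.image ω (Finset.range n)).card < B - K})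
    (fun n => hcm n (measurableSet_Iio (a := B - K))) (collectTime B K) ?_
    (∑ j ∈ Finset.range (B - K), (B:ℝ)/(B-j))
    (∑ j ∈ Finset.range (B - K), (2 * ((B:ℝ)/(B-j) *
      ∑ i ∈ Finset.range j, (B:ℝ)/(B-(i+1:ℕ))) + (B:ℝ)/(B-j))) ?_ ?_]
  · exact alg (fun j => (B:ℝ)/(B-j)) (by simp [hB']) _
  · intro ω ⟨N, hN⟩ n
    have hne : {n : ℕ | B - K ≤ (Finset.image ω (Finset.range n)).card}.Nonempty :=
      ⟨N, by simpa using hN⟩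
    have hmem := Nat.sInf_mem hne
    constructor
    · intro h
      have := Nat.notMem_of_lt_sInf h
      change (Finset.image ω (Finset.range n)).card < B - K
      by_contra hc
      exact this (not_lt.1 hc)
    · intro h
      by_contra hc
      push Not at hc
      have h1 : (Finset.image ω (Finset.range (collectTime B K ω))).card
        ≤ (Finset.image ω (Finset.range n)).card :=
        Finset.card_le_card (Finset.image_subset_image (Finset.range_mono hc))
      have h2 : B - K ≤ (Finset.image ω (Finset.range (collectTime B K ω))).card := hmem
      exact absurd (h2.trans h1) (not_le.2 h)
  · simp only [hA]
    exact hasSum_sum (fun j hj => (hch j (hlt j hj)).1)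
  · simp only [hA]
    have hmul : (fun n : ℕ => (2 * (n:ℝ) + 1) * ∑ j ∈ Finset.range (B - K), p n j) =
        fun n : ℕ => ∑ j ∈ Finset.range (B - K), (2 * (n:ℝ) + 1) * p n j := by
      funext n
      rw [Finset.mul_sum]
    rw [hmul]
    refine hasSum_sum (fun j hj => ?_)
    obtain ⟨c1, c2⟩ := hch j (hlt j hj)
    have hc := (c2.mul_left 2).add c1
    have hfe : (fun n : ℕ => (2 * (n:ℝ) + 1) * p n j) =
        fun n : ℕ => 2 * ((n:ℝ) * p n j) + p n j := by
      funext n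
      ring
    rw [hfe]
    exact hc

lemma sum_lower (K d : ℕ) :
    1/((K:ℝ)+1) - 1/((K+d:ℕ)+1:ℝ) ≤ ∑ i ∈ Finset.range d, 1/((K:ℝ)+i+1)^2 := by
  induction d with
  | zero => simp
  | succ d ih =>
    rw [Finset.sum_range_succ]
    have : 1/((K+d:ℕ)+1:ℝ) - 1/((K+(d+1):ℕ)+1:ℝ) ≤ 1/((K:ℝ)+d+1)^2 := by
      push_cast
      rw [div_sub_div _ _ (by positivity) (by positivity), div_le_div_iff₀ (by positivity) (by positivity)]
      nlinarith [(by positivity : (0:ℝ) ≤ (K:ℝ)+d+1)]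
    linarith

lemma sum_upper (K d : ℕ) (hK : 1 ≤ K) :
    ∑ i ∈ Finset.range d, 1/((K:ℝ)+i+1)^2 ≤ 1/(K:ℝ) - 1/((K+d:ℕ):ℝ) := by
  have : (0:ℝ) < K := by exact_mod_cast hK
  induction d with
  | zero => simp
  | succ d ih =>
    rw [Finset.sum_range_succ]
    have : 1/((K:ℝ)+d+1)^2 ≤ 1/((K+d:ℕ):ℝ) - 1/((K+(d+1):ℕ):ℝ) := by
      push_cast
      rw [div_sub_div _ _ (by positivity) (by positivity), div_le_div_iff₀ (by positivity) (by positivity)]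
      nlinarith [(by positivity : (0:ℝ) ≤ (K:ℝ)+d+1)]
    linarith

lemma harm_diff (K d : ℕ) :
    ∑ i ∈ Finset.range d, 1/((K:ℝ)+i+1) = (harmonic (K+d) : ℝ) - harmonic K := by
  induction d with
  | zero => simp
  | succ d ih =>
    rw [Finset.sum_range_succ, ih, ← add_assoc, harmonic_succ]
    push_cast
    rw [one_div]
    ring

lemma var_over (B K : ℕ) (hK : K ≤ B) (hB : 1 ≤ B) :
    (∑ j ∈ Finset.range (B - K), (((B:ℝ)/(B-j))^2 - (B:ℝ)/(B-j))) / B =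
     B * (∑ i ∈ Finset.range (B-K), 1/((K:ℝ)+i+1)^2) - ((harmonic B : ℝ) - harmonic K) := by
  have hB' : (B:ℝ) ≠ 0 := by positivity
  have := harm_diff K (B-K)
  rw [Nat.add_sub_cancel' hK] at this
  rw [← this, ← Finset.sum_range_reflect, Finset.mul_sum, ← Finset.sum_sub_distrib,
    Finset.sum_div]
  refine Finset.sum_congr rfl (fun i hi => ?_)
  have hi := Finset.mem_range.1 hi
  have e : ((B - K - 1 - i : ℕ) : ℝ) = B - K - 1 - i := by
    rw [Nat.cast_sub (by omega), Nat.cast_sub (by omega), Nat.cast_sub hK]; simp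
  rw [e]
  have : (B:ℝ) - (B - K - 1 - i) = K + i + 1 := by ring
  rw [this]
  have : (K:ℝ) + i + 1 ≠ 0 := by positivity
  field_simp

/-- **The normalized variance depends asymptotically only on the replacement fraction.**
Fix `α ∈ (0,1)` and set `K_B = ⌈α B⌉`. For any family `μ B` of probability measures on
`ℕ → Fin B` (for `B ≥ 1`) under which the draws are independent and uniform on the `B` coupons,
the normalized variance `Var[T_{B,K_B}]/B` converges to `(1/α - 1) - ln(1/α)` as `B → ∞`. -/
theorem normalized_variance_tendsto_of_replacement_fraction
    (α : ℝ) (hα : α ∈ Set.Ioo (0 : ℝ) 1)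
    (μ : ∀ B : ℕ, Measure (ℕ → Fin B))
    (hprob : ∀ B : ℕ, 1 ≤ B → IsProbabilityMeasure (μ B))
    (hIndep : ∀ B : ℕ, 1 ≤ B →
      iIndepFun (fun i (ω : ℕ → Fin B) => ω i) (μ B))
    (hUnif : ∀ B : ℕ, 1 ≤ B → ∀ i : ℕ, (μ B).map (fun ω => ω i) = uniformFin B) :
    Tendsto
      (fun B : ℕ => variance (fun ω => (collectTime B ⌈α * B⌉₊ ω : ℝ)) (μ B) / B)
      atTop (nhds ((1 / α - 1) - Real.log (1 / α))) := by
  obtain ⟨h0, h1⟩ := hα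
  have hK1 : ∀ B : ℕ, 1 ≤ B → 1 ≤ ⌈α * B⌉₊ := by
    intro B hB
    have : (0:ℝ) < B := by exact_mod_cast hB
    exact Nat.ceil_pos.2 (by positivity)
  have hKB : ∀ B : ℕ, ⌈α * B⌉₊ ≤ B := by
    intro B
    refine Nat.ceil_le.2 ?_
    have : (0:ℝ) ≤ B := by positivity
    nlinarith
  have hr : Tendsto (fun B : ℕ => ((⌈α * B⌉₊ : ℕ) : ℝ) / B) atTop (nhds α) :=
    (tendsto_nat_ceil_mul_div_atTop h0.le).comp tendsto_natCast_atTop_atTop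
  have hKt : Tendsto (fun B : ℕ => ⌈α * B⌉₊) atTop atTop :=
    tendsto_nat_ceil_atTop.comp (tendsto_natCast_atTop_atTop.const_mul_atTop h0)
  have hinv : Tendsto (fun B : ℕ => 1 / (B:ℝ)) atTop (nhds 0) := tendsto_one_div_atTop_nhds_zero_nat
  have hH : Tendsto (fun B : ℕ => ((harmonic B : ℝ) - harmonic ⌈α * B⌉₊)) atTop
      (nhds (Real.log (1 / α))) := by
    have a1 := Real.tendsto_harmonic_sub_log
    have a2 := a1.sub (a1.comp hKt)
    have a3 := (hr.log h0.ne').neg.add a2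
    rw [one_div, Real.log_inv]
    convert a3.congr' ?_ using 2
    · ring
    · filter_upwards [eventually_ge_atTop 1] with B hB
      have b1 : (B:ℝ) ≠ 0 := by positivity
      have b2 : ((⌈α * B⌉₊ : ℕ) : ℝ) ≠ 0 := by
        have := hK1 B hB
        positivity
      simp only [Function.comp]
      rw [Real.log_div b2 b1]
      ring
  have hS : Tendsto (fun B : ℕ => (B:ℝ) * (∑ i ∈ Finset.range (B-⌈α * B⌉₊),
      1/((⌈α * B⌉₊:ℝ)+i+1)^2)) atTop (nhds (1/α - 1)) := by
    have l1 : Tendsto (fun B : ℕ => 1/(((⌈α * B⌉₊ : ℕ) : ℝ) / B + 1/(B:ℝ)) - 1/(1 + 1/(B:ℝ)))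
        atTop (nhds (1/α - 1)) := by
      have := (Tendsto.div (tendsto_const_nhds (x := (1:ℝ))) (hr.add hinv) (by simpa using h0.ne')).sub
        (Tendsto.div (tendsto_const_nhds (x := (1:ℝ))) ((tendsto_const_nhds (x := (1:ℝ))).add hinv) (by simp))
      simpa using this
    have l2 : Tendsto (fun B : ℕ => 1/(((⌈α * B⌉₊ : ℕ) : ℝ) / B) - 1)
        atTop (nhds (1/α - 1)) :=
      (Tendsto.div (tendsto_const_nhds (x := (1:ℝ))) hr h0.ne').sub_const 1
    refine tendsto_of_tendsto_of_tendsto_of_le_of_le' l1 l2 ?_ ?_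
    · filter_upwards [eventually_ge_atTop 1] with B hB
      have b1 : (0:ℝ) < B := by positivity
      have := mul_le_mul_of_nonneg_left (sum_lower ⌈α * B⌉₊ (B - ⌈α * B⌉₊)) b1.le
      rw [Nat.add_sub_cancel' (hKB B)] at this
      refine le_trans (le_of_eq ?_) this
      field_simp
    · filter_upwards [eventually_ge_atTop 1] with B hB
      have b1 : (0:ℝ) < B := by positivity
      have := mul_le_mul_of_nonneg_left (sum_upper ⌈α * B⌉₊ (B - ⌈α * B⌉₊) (hK1 B hB)) b1.le
      rw [Nat.add_sub_cancel' (hKB B)] at this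
      refine le_trans this (le_of_eq ?_)
      field_simp
  refine (hS.sub hH).congr' ?_
  filter_upwards [eventually_ge_atTop 1] with B hB
  haveI := hprob B hB
  rw [var_formula B _ (μ B) hB (hK1 B hB) (hIndep B hB) (hUnif B hB), var_over B _ (hKB B) hB]
end

section
/- (Newman–Shepp double dixie cup asymptotics.) Fix a natural number F ≥ 1. In the coupon collector process with B distinct coupons drawn independently and uniformly at random, let T_{B}^{(F)} be the first time n at which every coupon has appeared at least F times among the first n draws. Then as B → ∞, (E[T_B^{(F)}] − B·ln B)/(B·ln ln B) converges to F − 1; equivalently, E[T_B^{(F)}] = B·ln B + (F−1)·B·ln ln B + o(B·ln ln B). -/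
open MeasureTheory ProbabilityTheory Filter
open scoped ENNReal

/-- The double dixie cup stopping time `T_B^{(F)}`: the least `n` such that every one of the
`B` coupons has appeared at least `F` times among the first `n` draws. -/
noncomputable def coverTimeMulti (B F : ℕ) (ω : ℕ → Fin B) : ℕ :=
  sInf {n : ℕ | ∀ c : Fin B, F ≤ ((Finset.range n).filter fun i => ω i = c).card}

namespace DixieCup

/-- number of draws of coupon `c` among the first `n`. -/
def cnt {B : ℕ} (n : ℕ) (c : Fin B) (ω : ℕ → Fin B) : ℕ :=
  ((Finset.range n).filter fun i => ω i = c).card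

lemma cnt_mono {B : ℕ} {m n : ℕ} (h : m ≤ n) (c : Fin B) (ω : ℕ → Fin B) :
    cnt m c ω ≤ cnt n c ω := by
  unfold cnt
  apply Finset.card_le_card
  apply Finset.filter_subset_filter
  exact Finset.range_mono h

lemma measurable_cnt {B : ℕ} (n : ℕ) (c : Fin B) :
    Measurable (cnt n c) := by
  unfold cnt
  simp only [Finset.card_filter]
  refine Finset.measurable_sum _ fun i _ => ?_
  exact (measurable_of_finite (fun x : Fin B => if x = c then 1 else 0)).comp (measurable_pi_apply i)

/-- All coupons seen at least `F` times by time `n`. -/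
def done (B F n : ℕ) : Set (ℕ → Fin B) := {ω | ∀ c : Fin B, F ≤ cnt n c ω}

lemma measurableSet_done (B F n : ℕ) : MeasurableSet (done B F n) := by
  unfold done
  rw [Set.ofPred_forall]
  exact MeasurableSet.iInter fun c => measurableSet_le measurable_const (measurable_cnt n c)

lemma done_mono (B F : ℕ) {m n : ℕ} (h : m ≤ n) : done B F m ⊆ done B F n :=
  fun ω hω c => (hω c).trans (cnt_mono h c ω)

lemma cover_le_iff (B F n : ℕ) (ω : ℕ → Fin B) :
    coverTimeMulti B F ω ≤ n ↔ ω ∈ done B F n ∨ ∀ m, ω ∉ done B F m := by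
  have hdef : coverTimeMulti B F ω = sInf {n : ℕ | ω ∈ done B F n} := rfl
  rw [hdef]
  constructor
  · intro h
    by_cases hne : {n : ℕ | ω ∈ done B F n}.Nonempty
    · left
      exact done_mono B F h (Nat.sInf_mem hne)
    · right
      intro m hm
      exact hne ⟨m, hm⟩
  · rintro (h | h)
    · exact Nat.sInf_le h
    · have : {n : ℕ | ω ∈ done B F n} = ∅ := by
        ext m; simp [h m]
      rw [this]; simp

lemma measurable_cover (B F : ℕ) : Measurable (coverTimeMulti B F) := by
  refine measurable_of_Iic fun n => ?_
  have : coverTimeMulti B F ⁻¹' Set.Iic n = done B F n ∪ ⋂ m, (done B F m)ᶜ := by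
    ext ω
    simp [cover_le_iff]
  rw [this]
  exact (measurableSet_done _ _ _).union
    (MeasurableSet.iInter fun m => (measurableSet_done _ _ _).compl)

section fixedB

variable {B : ℕ} {μ : Measure (ℕ → Fin B)}

lemma integral_uniform (g : Fin B → ℝ) :
    ∫ x, g x ∂(uniformFin B) = (B : ℝ)⁻¹ * ∑ x, g x := by
  unfold uniformFin
  rw [integral_smul_measure, integral_count]
  simp

/-- expectation of a product of functions of separate draws. -/
lemma integral_prod [IsProbabilityMeasure μ]
    (hI : iIndepFun (fun i (ω : ℕ → Fin B) => ω i) μ)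
    (hU : ∀ i : ℕ, μ.map (fun ω => ω i) = uniformFin B)
    (n : ℕ) (g : ℕ → Fin B → ℝ) :
    ∫ ω, ∏ i ∈ Finset.range n, g i (ω i) ∂μ
      = ∏ i ∈ Finset.range n, ((B : ℝ)⁻¹ * ∑ x, g i x) := by
  have h1 : iIndepFun (fun (i : Fin n) (ω : ℕ → Fin B) => ω (i : ℕ)) μ :=
    hI.precomp (g := fun i : Fin n => (i : ℕ)) Fin.val_injective
  have h2 := h1.integral_fun_prod_comp (f := fun (i : Fin n) (x : Fin B) => g i x)
    (fun i => (measurable_pi_apply _).aemeasurable)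
    (fun i => (measurable_of_finite _).aestronglyMeasurable)
  simp only [Finset.prod_range]
  rw [h2]
  refine Finset.prod_congr rfl fun i _ => ?_
  rw [← integral_uniform, ← hU i, integral_map (measurable_pi_apply _).aemeasurable
    (measurable_of_finite _).aestronglyMeasurable]

lemma measurable_prodfun (n : ℕ) (g : ℕ → Fin B → ℝ) :
    Measurable (fun ω : ℕ → Fin B => ∏ i ∈ Finset.range n, g i (ω i)) :=
  Finset.measurable_prod _ fun i _ => (measurable_of_finite (g i)).comp (measurable_pi_apply i)

lemma integrable_prodfun [IsProbabilityMeasure μ] (n : ℕ) (g : ℕ → Fin B → ℝ)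
    (hg : ∀ i x, |g i x| ≤ 1) :
    Integrable (fun ω : ℕ → Fin B => ∏ i ∈ Finset.range n, g i (ω i)) μ := by
  refine Integrable.of_bound (measurable_prodfun n g).aestronglyMeasurable 1 ?_
  refine Filter.Eventually.of_forall fun ω => ?_
  rw [Real.norm_eq_abs, Finset.abs_prod]
  exact Finset.prod_le_one (fun i _ => abs_nonneg _) fun i _ => hg _ _

lemma pow_cnt (n : ℕ) (c : Fin B) (s : ℝ) (ω : ℕ → Fin B) :
    ∏ i ∈ Finset.range n, (if ω i = c then s else 1) = s ^ cnt n c ω := by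
  unfold cnt
  rw [Finset.prod_ite]; simp

lemma chernoff [IsProbabilityMeasure μ] (hB : 1 ≤ B)
    (hI : iIndepFun (fun i (ω : ℕ → Fin B) => ω i) μ)
    (hU : ∀ i : ℕ, μ.map (fun ω => ω i) = uniformFin B)
    (n k : ℕ) (c : Fin B) (s : ℝ) (hs0 : 0 < s) (hs1 : s < 1) :
    μ.real {ω | cnt n c ω ≤ k} ≤ (s⁻¹) ^ k * (1 - (1 - s) / B) ^ n := by
  have hB' : (0 : ℝ) < B := by exact_mod_cast hB
  have hTint : ∫ ω, s ^ cnt n c ω ∂μ = (1 - (1 - s) / B) ^ n := by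
    simp_rw [← pow_cnt]
    rw [integral_prod hI hU n (fun _ x => if x = c then s else 1)]
    rw [Finset.prod_const, Finset.card_range]
    congr 1
    rw [Finset.sum_ite]
    simp [Finset.filter_eq', Finset.filter_ne']
    rw [Nat.cast_sub hB]
    field_simp
    push_cast
    ring
  have hTintg : Integrable (fun ω => s ^ cnt n c ω) μ := by
    simp_rw [← pow_cnt]
    refine integrable_prodfun n (fun _ x => if x = c then s else 1) fun i x => ?_
    split_ifs
    · rw [abs_of_pos hs0]; exact hs1.le
    · simp
  have hM := mul_meas_ge_le_integral_of_nonneg (μ := μ)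
    (f := fun ω => s ^ cnt n c ω) (Filter.Eventually.of_forall fun ω => by positivity) hTintg (s ^ k)
  rw [hTint] at hM
  have hsub : {ω : ℕ → Fin B | cnt n c ω ≤ k} ⊆ {ω | s ^ k ≤ s ^ cnt n c ω} := by
    intro ω hω
    exact pow_le_pow_of_le_one hs0.le hs1.le hω
  have h3 : μ.real {ω | cnt n c ω ≤ k} ≤ μ.real {ω | s ^ k ≤ s ^ cnt n c ω} := measureReal_mono hsub
  have hsk : 0 < s ^ k := by positivity
  rw [inv_pow, inv_mul_eq_div, le_div_iff₀ hsk]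
  calc _ ≤ μ.real {ω | s ^ k ≤ s ^ cnt n c ω} * s ^ k := by gcongr
    _ ≤ _ := by rw [mul_comm]; exact hM

lemma not_done_le [IsProbabilityMeasure μ] (hB : 1 ≤ B)
    (hI : iIndepFun (fun i (ω : ℕ → Fin B) => ω i) μ)
    (hU : ∀ i : ℕ, μ.map (fun ω => ω i) = uniformFin B)
    (n k : ℕ) (s : ℝ) (hs0 : 0 < s) (hs1 : s < 1) :
    μ.real (done B (k+1) n)ᶜ ≤ B * ((s⁻¹) ^ k * (1 - (1 - s) / B) ^ n) := by
  have : (done B (k+1) n)ᶜ = ⋃ c : Fin B, {ω | cnt n c ω ≤ k} := by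
    ext ω
    simp [done]
  rw [this]
  refine (measureReal_iUnion_fintype_le _).trans ?_
  refine (Finset.sum_le_sum fun c _ => chernoff hB hI hU n k c s hs0 hs1).trans ?_
  simp

lemma ae_exists_done [IsProbabilityMeasure μ] (hB : 1 ≤ B)
    (hI : iIndepFun (fun i (ω : ℕ → Fin B) => ω i) μ)
    (hU : ∀ i : ℕ, μ.map (fun ω => ω i) = uniformFin B) (k : ℕ) :
    μ.real (⋂ m, (done B (k+1) m)ᶜ) = 0 := by
  have hB' : (1 : ℝ) ≤ B := by exact_mod_cast hB
  have h0 : (1 / 2 : ℝ) / B ≤ 1 := by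
    rw [div_le_one (by positivity)]; linarith
  have h1 : 0 < (1 / 2 : ℝ) / B := by positivity
  have hlim : Tendsto (fun n : ℕ => (B : ℝ) * (((1/2 : ℝ)⁻¹) ^ k * (1 - (1 - 1/2) / B) ^ n)) atTop
      (nhds (B * (((1/2 : ℝ)⁻¹) ^ k * 0))) := by
    refine (Tendsto.const_mul _ (Tendsto.const_mul _ ?_))
    apply tendsto_pow_atTop_nhds_zero_of_lt_one
    · norm_num at *; linarith
    · norm_num at *; linarith
  simp only [mul_zero] at hlim
  refine le_antisymm (ge_of_tendsto' hlim fun n => ?_) measureReal_nonneg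
  refine le_trans (measureReal_mono (Set.iInter_subset _ n)) ?_
  exact not_done_le hB hI hU n k (1/2) (by norm_num) (by norm_num)

lemma measure_cover_le [IsProbabilityMeasure μ] (hB : 1 ≤ B)
    (hI : iIndepFun (fun i (ω : ℕ → Fin B) => ω i) μ)
    (hU : ∀ i : ℕ, μ.map (fun ω => ω i) = uniformFin B) (k n : ℕ) :
    μ.real {ω | coverTimeMulti B (k+1) ω ≤ n} ≤ μ.real (done B (k+1) n) := by
  have : {ω | coverTimeMulti B (k+1) ω ≤ n} = done B (k+1) n ∪ ⋂ m, (done B (k+1) m)ᶜ := by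
    ext ω; simp [cover_le_iff]
  rw [this]
  refine (measureReal_union_le _ _).trans ?_
  rw [ae_exists_done hB hI hU]; simp

lemma nat_eq_tsum (T : ℕ) : (T : ℝ≥0∞) = ∑' n : ℕ, if n < T then (1 : ℝ≥0∞) else 0 := by
  rw [tsum_eq_sum (s := Finset.range T)]
  · rw [Finset.sum_congr rfl (g := fun _ => (1 : ℝ≥0∞))]
    · simp
    · intro n hn; simp at hn; simp [hn]
  · intro n hn; simp at hn; simp [hn]

/-- the upper bound on the expectation -/
lemma upper [IsProbabilityMeasure μ] (hB : 1 ≤ B)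
    (hI : iIndepFun (fun i (ω : ℕ → Fin B) => ω i) μ)
    (hU : ∀ i : ℕ, μ.map (fun ω => ω i) = uniformFin B)
    (n₀ k : ℕ) (s : ℝ) (hs0 : 0 < s) (hs1 : s < 1) :
    Integrable (fun ω => (coverTimeMulti B (k+1) ω : ℝ)) μ ∧
    ∫ ω, (coverTimeMulti B (k+1) ω : ℝ) ∂μ ≤
      n₀ + B * ((s⁻¹) ^ k * (1 - (1 - s) / B) ^ n₀) * (B / (1 - s)) := by
  have hB' : (1 : ℝ) ≤ B := by exact_mod_cast hB
  set q : ℝ := 1 - (1 - s) / B with hq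
  have hd : (1 - s) / B ≤ 1 - s := div_le_self (by linarith) hB'
  have hd0 : 0 < (1 - s) / B := div_pos (by linarith) (by linarith)
  have hq0 : 0 < q := by rw [hq]; linarith
  have hq1 : q < 1 := by rw [hq]; linarith
  set A : ℝ := B * ((s⁻¹) ^ k * q ^ n₀) with hA
  have hA0 : 0 ≤ A := by positivity
  have hmeas : ∀ n : ℕ, MeasurableSet {ω | n < coverTimeMulti B (k+1) ω} := fun n =>
    measurableSet_lt measurable_const (measurable_cover _ _)
  have htail : ∀ n : ℕ, μ {ω | n + n₀ < coverTimeMulti B (k+1) ω} ≤ ENNReal.ofReal (A * q ^ n) := by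
    intro n
    rw [← ENNReal.ofReal_toReal (measure_ne_top μ {ω | n + n₀ < coverTimeMulti B (k+1) ω})]
    apply ENNReal.ofReal_le_ofReal
    have hsub : {ω | n + n₀ < coverTimeMulti B (k+1) ω} ⊆ (done B (k+1) (n + n₀))ᶜ := by
      intro ω hω hd
      exact absurd ((cover_le_iff B (k+1) (n+n₀) ω).2 (Or.inl hd)) (not_le.2 hω)
    refine (measureReal_mono hsub).trans ((not_done_le hB hI hU (n + n₀) k s hs0 hs1).trans ?_)
    rw [hA, ← hq, pow_add]
    apply le_of_eq; ring
  have hL : ∫⁻ ω, (coverTimeMulti B (k+1) ω : ℝ≥0∞) ∂μ ≤ ENNReal.ofReal (n₀ + A * (B / (1 - s))) := by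
    have e1 : ∫⁻ ω, (coverTimeMulti B (k+1) ω : ℝ≥0∞) ∂μ
        = ∑' n : ℕ, μ {ω | n < coverTimeMulti B (k+1) ω} := by
      simp_rw [nat_eq_tsum (coverTimeMulti B (k+1) _)]
      rw [lintegral_tsum]
      · congr 1; ext n
        rw [← lintegral_indicator_one (hmeas n)]
        refine lintegral_congr fun ω => ?_
        simp [Set.indicator_apply]
      · intro n
        exact (Measurable.ite (hmeas n) measurable_const measurable_const).aemeasurable
    have e2 := Summable.sum_add_tsum_nat_add' (k := n₀) (f := fun n : ℕ =>
      μ {ω | n < coverTimeMulti B (k+1) ω}) ENNReal.summable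
    rw [e1, ← e2]
    rw [ENNReal.ofReal_add (by positivity) (mul_nonneg hA0 (div_nonneg (by linarith) (by linarith)))]
    refine add_le_add ?_ ?_
    · refine (Finset.sum_le_sum fun n _ => prob_le_one).trans ?_
      simp
    · refine (ENNReal.tsum_le_tsum htail).trans ?_
      rw [← ENNReal.ofReal_tsum_of_nonneg (fun n => by positivity)
        ((summable_geometric_of_lt_one hq0.le hq1).mul_left A), tsum_mul_left,
        tsum_geometric_of_lt_one hq0.le hq1]
      apply le_of_eq
      congr 2
      rw [hq]; simp
  have hTint : Integrable (fun ω => (coverTimeMulti B (k+1) ω : ℝ)) μ := by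
    refine ⟨((measurable_from_top (f := fun n : ℕ => (n : ℝ))).comp
      (measurable_cover B (k+1))).aestronglyMeasurable, ?_⟩
    rw [hasFiniteIntegral_iff_enorm]
    refine lt_of_le_of_lt (le_trans (le_of_eq ?_) hL) ENNReal.ofReal_lt_top
    congr 1; ext ω; simp [enorm]
  refine ⟨hTint, ?_⟩
  rw [integral_eq_lintegral_of_nonneg_ae (Filter.Eventually.of_forall fun ω => by positivity)
    hTint.aestronglyMeasurable]
  refine ENNReal.toReal_le_of_le_ofReal ?_ ?_
  · have : 0 ≤ (B / (1 - s) : ℝ) := div_nonneg (by linarith) (by linarith)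
    positivity
  · simpa using hL

/-- indicator that coupon `c` has appeared exactly `k` times. -/
def ind (n k : ℕ) (c : Fin B) (ω : ℕ → Fin B) : ℝ := if cnt n c ω = k then 1 else 0

lemma measurable_ind (n k : ℕ) (c : Fin B) : Measurable (ind n k c) :=
  Measurable.ite (measurableSet_eq_fun (measurable_cnt n c) measurable_const)
    measurable_const measurable_const

lemma prod_boole_eq (n : ℕ) (S : Finset ℕ) (hS : S ⊆ Finset.range n) (c : Fin B)
    (ω : ℕ → Fin B) :
    ∏ i ∈ Finset.range n, (if (ω i = c ↔ i ∈ S) then (1 : ℝ) else 0)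
      = if (Finset.range n).filter (fun i => ω i = c) = S then 1 else 0 := by
  rw [Finset.prod_boole]
  congr 1
  rw [eq_iff_iff]
  constructor
  · intro h
    ext i
    rw [Finset.mem_filter]
    constructor
    · rintro ⟨h1, h2⟩; exact (h i h1).1 h2
    · intro h1; exact ⟨hS h1, (h i (hS h1)).2 h1⟩
  · rintro rfl i hi
    rw [Finset.mem_filter]
    tauto

lemma ind_eq (n k : ℕ) (c : Fin B) (ω : ℕ → Fin B) :
    ind n k c ω = ∑ S ∈ Finset.powersetCard k (Finset.range n),
      ∏ i ∈ Finset.range n, (if (ω i = c ↔ i ∈ S) then (1 : ℝ) else 0) := by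
  rw [Finset.sum_congr rfl (fun S hS =>
    prod_boole_eq n S (Finset.mem_powersetCard.1 hS).1 c ω)]
  rw [Finset.sum_ite_eq]
  unfold ind cnt
  simp [Finset.mem_powersetCard]

lemma avg_one (hB : 1 ≤ B) (c : Fin B) (P : Prop) [Decidable P] :
    (B : ℝ)⁻¹ * ∑ x : Fin B, (if (x = c ↔ P) then (1 : ℝ) else 0)
      = if P then (B : ℝ)⁻¹ else 1 - (B : ℝ)⁻¹ := by
  have hB' : (0 : ℝ) < B := by exact_mod_cast hB
  by_cases hP : P
  · simp [hP]
  · have : ∀ x : Fin B, (if (x = c ↔ P) then (1 : ℝ) else 0) = 1 - (if x = c then 1 else 0) := by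
      intro x
      by_cases h : x = c <;> simp [h, hP]
    simp_rw [this]
    rw [Finset.sum_sub_distrib]
    simp [hP]
    field_simp

lemma avg_two (hB : 2 ≤ B) (c d : Fin B) (hcd : c ≠ d) (P Q : Prop) [Decidable P] [Decidable Q]
    (hPQ : ¬ (P ∧ Q)) :
    (B : ℝ)⁻¹ * ∑ x : Fin B, ((if (x = c ↔ P) then (1 : ℝ) else 0) *
      (if (x = d ↔ Q) then (1 : ℝ) else 0))
      = if P ∨ Q then (B : ℝ)⁻¹ else 1 - 2 * (B : ℝ)⁻¹ := by
  have hB' : (0 : ℝ) < B := by exact_mod_cast (by omega : 0 < B)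
  by_cases hP : P
  · have hQ : ¬ Q := fun h => hPQ ⟨hP, h⟩
    simp only [hP, hQ, iff_true, iff_false, true_or, if_true]
    rw [Finset.sum_eq_single c]
    · simp [hcd]
    · intro b _ hb; simp [hb]
    · simp
  · by_cases hQ : Q
    · simp only [hP, hQ, iff_true, iff_false, or_true, if_true]
      rw [Finset.sum_eq_single d]
      · simp [hcd.symm]
      · intro b _ hb; simp [hb]
      · simp
    · simp only [hP, hQ, iff_false, or_self, if_false]
      have : ∀ x : Fin B, ((if ¬ x = c then (1 : ℝ) else 0) * (if ¬ x = d then (1 : ℝ) else 0))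
          = 1 - (if x = c then 1 else 0) - (if x = d then 1 else 0) := by
        intro x
        by_cases h1 : x = c
        · subst h1; simp [hcd]
        · by_cases h2 : x = d <;> simp [h1, h2, hcd.symm]
      simp_rw [this]
      rw [Finset.sum_sub_distrib, Finset.sum_sub_distrib]
      simp
      field_simp
      ring

lemma prod_ite_mem (n : ℕ) (S : Finset ℕ) (hS : S ⊆ Finset.range n) (a b : ℝ) :
    ∏ i ∈ Finset.range n, (if i ∈ S then a else b) = a ^ S.card * b ^ (n - S.card) := by
  rw [Finset.prod_ite, Finset.prod_const, Finset.prod_const]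
  rw [Finset.filter_mem_eq_inter, Finset.inter_eq_right.2 hS]
  rw [Finset.filter_notMem_eq_sdiff, Finset.card_sdiff_of_subset hS, Finset.card_range]

lemma integral_ind [IsProbabilityMeasure μ] (hB : 1 ≤ B)
    (hI : iIndepFun (fun i (ω : ℕ → Fin B) => ω i) μ)
    (hU : ∀ i : ℕ, μ.map (fun ω => ω i) = uniformFin B) (n k : ℕ) (c : Fin B) :
    ∫ ω, ind n k c ω ∂μ = n.choose k * ((B : ℝ)⁻¹ ^ k * (1 - (B : ℝ)⁻¹) ^ (n - k)) := by
  simp_rw [ind_eq]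
  rw [integral_finsetSum]
  · rw [Finset.sum_congr rfl (g := fun _ => ((B : ℝ)⁻¹ ^ k * (1 - (B : ℝ)⁻¹) ^ (n - k)))]
    · simp
    · intro S hS
      rw [Finset.mem_powersetCard] at hS
      rw [integral_prod hI hU n (fun i x => if (x = c ↔ i ∈ S) then (1 : ℝ) else 0)]
      simp_rw [avg_one hB]
      rw [prod_ite_mem n S hS.1, hS.2]
  · intro S _
    refine integrable_prodfun n (fun i x => if (x = c ↔ i ∈ S) then (1 : ℝ) else 0) ?_
    intro i x
    split_ifs <;> simp

lemma integral_ind_mul [IsProbabilityMeasure μ] (hB : 2 ≤ B)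
    (hI : iIndepFun (fun i (ω : ℕ → Fin B) => ω i) μ)
    (hU : ∀ i : ℕ, μ.map (fun ω => ω i) = uniformFin B) (n k : ℕ) (c d : Fin B) (hcd : c ≠ d) :
    ∫ ω, ind n k c ω * ind n k d ω ∂μ ≤
      (n.choose k) ^ 2 * ((B : ℝ)⁻¹ ^ (2 * k) * (1 - 2 * (B : ℝ)⁻¹) ^ (n - 2 * k)) := by
  have hB' : (2 : ℝ) ≤ B := by exact_mod_cast hB
  have hr : 0 ≤ 1 - 2 * (B : ℝ)⁻¹ := by
    rw [sub_nonneg, ← div_eq_mul_inv, div_le_one (by linarith)]; exact hB'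
  simp_rw [ind_eq, Finset.sum_mul_sum, ← Finset.prod_mul_distrib]
  have hbd : ∀ S S' : Finset ℕ, ∀ (i : ℕ) (x : Fin B),
      |(if (x = c ↔ i ∈ S) then (1 : ℝ) else 0) * (if (x = d ↔ i ∈ S') then (1 : ℝ) else 0)| ≤ 1 := by
    intro S S' i x
    split_ifs <;> simp
  have hi := fun S S' : Finset ℕ => integrable_prodfun (μ := μ) n (fun i x =>
    (if (x = c ↔ i ∈ S) then (1 : ℝ) else 0) * (if (x = d ↔ i ∈ S') then (1 : ℝ) else 0)) (hbd S S')
  rw [integral_finsetSum _ (fun S _ => integrable_finsetSum _ fun S' _ => hi S S')]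
  simp_rw [integral_finsetSum _ (fun S' _ => hi _ S')]
  set v : ℝ := ((B : ℝ)⁻¹ ^ (2 * k) * (1 - 2 * (B : ℝ)⁻¹) ^ (n - 2 * k)) with hv
  have hv0 : 0 ≤ v := by positivity
  calc _ ≤ ∑ S ∈ Finset.powersetCard k (Finset.range n),
        ∑ S' ∈ Finset.powersetCard k (Finset.range n), v := by
        refine Finset.sum_le_sum fun S hS => Finset.sum_le_sum fun S' hS' => ?_
        rw [Finset.mem_powersetCard] at hS hS'
        rw [integral_prod hI hU n (fun i x => (if (x = c ↔ i ∈ S) then (1 : ℝ) else 0) *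
          (if (x = d ↔ i ∈ S') then (1 : ℝ) else 0))]
        by_cases hdis : Disjoint S S'
        · have : ∀ i, ¬ (i ∈ S ∧ i ∈ S') := fun i h => Finset.disjoint_left.1 hdis h.1 h.2
          simp_rw [fun i => avg_two hB c d hcd (i ∈ S) (i ∈ S') (this i)]
          simp_rw [← Finset.mem_union]
          rw [prod_ite_mem n _ (Finset.union_subset hS.1 hS'.1),
            Finset.card_union_of_disjoint hdis, hS.2, hS'.2, ← two_mul]
        · rw [Finset.not_disjoint_iff] at hdis
          obtain ⟨i, h1, h2⟩ := hdis
          rw [Finset.prod_eq_zero (hS.1 h1)]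
          · exact hv0
          · rw [Finset.sum_eq_zero, mul_zero]
            intro x _
            simp only [h1, h2, iff_true]
            by_cases h : x = c
            · subst h; simp [hcd]
            · simp [h]
    _ = _ := by simp; ring

lemma integrable_ind [IsProbabilityMeasure μ] (n k : ℕ) (c : Fin B) :
    Integrable (ind n k c) μ := by
  refine Integrable.of_bound (measurable_ind n k c).aestronglyMeasurable 1 ?_
  refine Filter.Eventually.of_forall fun ω => ?_
  unfold ind; split_ifs <;> simp

lemma integrable_ind_mul [IsProbabilityMeasure μ] (n k : ℕ) (c d : Fin B) :
    Integrable (fun ω => ind n k c ω * ind n k d ω) μ := by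
  refine Integrable.of_bound ((measurable_ind n k c).mul (measurable_ind n k d)).aestronglyMeasurable 1 ?_
  refine Filter.Eventually.of_forall fun ω => ?_
  unfold ind; split_ifs <;> simp

/-- second moment bound -/
lemma lower_prob [IsProbabilityMeasure μ] (hB : 2 ≤ B)
    (hI : iIndepFun (fun i (ω : ℕ → Fin B) => ω i) μ)
    (hU : ∀ i : ℕ, μ.map (fun ω => ω i) = uniformFin B) (n k : ℕ) (hkn : 2 * k ≤ n)
    (hkB : 4 * k ≤ B) :
    μ.real (done B (k+1) n) ≤
      (B * (n.choose k * ((B : ℝ)⁻¹ ^ k * (1 - (B : ℝ)⁻¹) ^ (n - k))))⁻¹ + 4 * k / B := by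
  have hB' : (2 : ℝ) ≤ B := by exact_mod_cast hB
  have hkB' : (4 : ℝ) * k ≤ B := by exact_mod_cast hkB
  have hBi : (B : ℝ)⁻¹ ≤ 1/2 := by
    rw [one_div]; exact inv_anti₀ (by norm_num) hB'
  have hBi0 : 0 < (B : ℝ)⁻¹ := by positivity
  set r : ℝ := (B : ℝ)⁻¹ with hr
  set p : ℝ := n.choose k * (r ^ k * (1 - r) ^ (n - k)) with hp
  have hp0 : 0 < p := by
    have : 0 < n.choose k := Nat.choose_pos (by omega)
    have h2 : 0 < 1 - r := by linarith
    positivity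
  have h12 : ∀ c d : Fin B, c ≠ d → ∫ ω, ind n k c ω * ind n k d ω ∂μ ≤ p ^ 2 * (1 + 4 * k / B) := by
    intro c d hcd
    refine (integral_ind_mul hB hI hU n k c d hcd).trans ?_
    have h1r : 0 < 1 - r := by linarith
    have e1 : (1 - 2 * r) ^ (n - 2 * k) ≤ ((1 - r) ^ 2) ^ (n - 2 * k) := by
      apply pow_le_pow_left₀ (by linarith)
      nlinarith
    have e2 : 1 ≤ (1 - r) ^ (2 * k) * (1 + 4 * k / B) := by
      have b := one_add_mul_le_pow (a := -r) (by linarith) (2 * k)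
      have hx : (4 * k / B : ℝ) = 4 * (k * r) := by rw [hr]; ring
      have hkr : (k : ℝ) * r ≤ 1 / 4 := by
        rw [hr, ← div_eq_mul_inv, div_le_iff₀ (by linarith)]; linarith
      have hkr0 : 0 ≤ (k : ℝ) * r := by positivity
      rw [hx]
      push_cast at b
      have b' : 1 - 2 * (k * r) ≤ (1 - r) ^ (2 * k) := by
        have : 1 + 2 * (k : ℝ) * -r = 1 - 2 * (k * r) := by ring
        rw [this] at b
        simpa [sub_eq_add_neg] using b
      calc (1 : ℝ) ≤ (1 - 2 * (k * r)) * (1 + 4 * (k * r)) := by nlinarith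
        _ ≤ _ := by gcongr
    have e3 : (1 - 2 * r) ^ (n - 2 * k) ≤ ((1 - r) ^ (n - k)) ^ 2 * (1 + 4 * k / B) := by
      calc (1 - 2 * r) ^ (n - 2 * k) ≤ ((1 - r) ^ 2) ^ (n - 2 * k) * 1 := by rw [mul_one]; exact e1
        _ ≤ ((1 - r) ^ 2) ^ (n - 2 * k) * ((1 - r) ^ (2 * k) * (1 + 4 * k / B)) := by gcongr
        _ = _ := by
          rw [← mul_assoc, ← pow_mul, ← pow_add, ← pow_mul]
          congr 2; omega
    calc _ ≤ (n.choose k : ℝ) ^ 2 * (r ^ (2 * k) * (((1 - r) ^ (n - k)) ^ 2 * (1 + 4 * k / B))) := by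
          gcongr
      _ = _ := by rw [hp]; ring
  have h11 : ∀ c : Fin B, ∫ ω, ind n k c ω * ind n k c ω ∂μ = p := by
    intro c
    rw [hp, ← integral_ind (by omega) hI hU n k c]
    congr 1; ext ω
    unfold ind; split_ifs <;> simp
  set W : (ℕ → Fin B) → ℝ := fun ω => ∑ c : Fin B, ind n k c ω with hW
  have hWint : Integrable W μ := integrable_finsetSum _ fun c _ => integrable_ind n k c
  have hW2 : ∀ ω, W ω ^ 2 = ∑ c : Fin B, ∑ d : Fin B, ind n k c ω * ind n k d ω := by
    intro ω; rw [hW, sq, Finset.sum_mul_sum]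
  have hW2int : Integrable (fun ω => W ω ^ 2) μ := by
    simp_rw [hW2]
    exact integrable_finsetSum _ fun c _ => integrable_finsetSum _ fun d _ => integrable_ind_mul n k c d
  have hEW : ∫ ω, W ω ∂μ = B * p := by
    rw [hW, integral_finsetSum _ fun c _ => integrable_ind n k c]
    simp_rw [integral_ind (by omega : 1 ≤ B) hI hU]
    simp [hp, hr]
  have hEW2 : ∫ ω, W ω ^ 2 ∂μ ≤ B * p + B ^ 2 * (p ^ 2 * (1 + 4 * k / B)) := by
    simp_rw [hW2]
    rw [integral_finsetSum _ fun c _ => integrable_finsetSum _ fun d _ => integrable_ind_mul n k c d]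
    simp_rw [integral_finsetSum _ fun d _ => integrable_ind_mul n k _ d]
    calc _ ≤ ∑ c : Fin B, ∑ d : Fin B, ((if c = d then p else 0) + p ^ 2 * (1 + 4 * k / B)) := by
          refine Finset.sum_le_sum fun c _ => Finset.sum_le_sum fun d _ => ?_
          by_cases h : c = d
          · subst h
            rw [h11]; simp; positivity
          · simpa [h] using h12 c d h
      _ = _ := by
        simp [Finset.sum_add_distrib]; ring
  set m : ℝ := B * p with hm
  have hm0 : 0 < m := by positivity
  have hvarint : Integrable (fun ω => (W ω - m) ^ 2) μ := by
    have : (fun ω => (W ω - m) ^ 2) = fun ω => W ω ^ 2 - (2 * m) * W ω + m ^ 2 := by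
      ext ω; ring
    rw [this]
    exact (hW2int.sub (hWint.const_mul _)).add (integrable_const _)
  have hvar : ∫ ω, (W ω - m) ^ 2 ∂μ ≤ m + m ^ 2 * (4 * k / B) := by
    have : (fun ω => (W ω - m) ^ 2) = fun ω => W ω ^ 2 - (2 * m) * W ω + m ^ 2 := by
      ext ω; ring
    have hs : Integrable (fun ω => W ω ^ 2 - (2 * m) * W ω) μ := hW2int.sub (hWint.const_mul _)
    rw [this, integral_add hs (integrable_const _), integral_sub hW2int (hWint.const_mul _), integral_const_mul, hEW]
    simp
    have : (B : ℝ) ^ 2 * (p ^ 2 * (1 + 4 * k / B)) = m ^ 2 + m ^ 2 * (4 * k / B) := by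
      rw [hm]; ring
    rw [this] at hEW2
    linarith
  have hM := mul_meas_ge_le_integral_of_nonneg (μ := μ)
    (f := fun ω => (W ω - m) ^ 2) (Filter.Eventually.of_forall fun ω => by positivity) hvarint (m ^ 2)
  have hsub : done B (k+1) n ⊆ {ω | m ^ 2 ≤ (W ω - m) ^ 2} := by
    intro ω hω
    have : W ω = 0 := by
      rw [hW]
      refine Finset.sum_eq_zero fun c _ => ?_
      have := hω c
      unfold ind
      rw [if_neg (by omega)]
    simp [this]
  have h3 : μ.real (done B (k+1) n) ≤ μ.real {ω | m ^ 2 ≤ (W ω - m) ^ 2} := measureReal_mono hsub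
  have h4 : m ^ 2 * μ.real (done B (k+1) n) ≤ m + m ^ 2 * (4 * k / B) :=
    (mul_le_mul_of_nonneg_left h3 (by positivity)).trans (hM.trans hvar)
  have h5 : m + m ^ 2 * (4 * k / B) = m ^ 2 * (m⁻¹ + 4 * k / B) := by
    field_simp
  rw [h5] at h4
  exact le_of_mul_le_mul_left h4 (by positivity)

/-- two-level lower bound on the expectation -/
lemma lower [IsProbabilityMeasure μ] (hB : 1 ≤ B)
    (hI : iIndepFun (fun i (ω : ℕ → Fin B) => ω i) μ)
    (hU : ∀ i : ℕ, μ.map (fun ω => ω i) = uniformFin B) (k n₁ n₂ : ℕ) (h : n₂ ≤ n₁) :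
    (n₁ : ℝ) - n₂ * μ.real (done B (k+1) n₂) - (n₁ - n₂) * μ.real (done B (k+1) n₁)
      ≤ ∫ ω, (coverTimeMulti B (k+1) ω : ℝ) ∂μ := by
  have hTint := (upper hB hI hU 0 k (1/2) (by norm_num) (by norm_num)).1
  have h' : (n₂ : ℝ) ≤ n₁ := by exact_mod_cast h
  set A : ℕ → Set (ℕ → Fin B) := fun n => {ω | coverTimeMulti B (k+1) ω ≤ n} with hA
  have hAm : ∀ n, MeasurableSet (A n) := fun n =>
    measurableSet_le (measurable_cover _ _) measurable_const
  have hAint : ∀ n (a : ℝ), Integrable ((A n).indicator fun _ => a) μ := fun n a =>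
    (integrable_const a).indicator (hAm n)
  have key : ∫ ω, ((n₁ : ℝ) - (A n₂).indicator (fun _ => (n₂ : ℝ)) ω
      - (A n₁).indicator (fun _ => (n₁ - n₂ : ℝ)) ω) ∂μ
      ≤ ∫ ω, (coverTimeMulti B (k+1) ω : ℝ) ∂μ := by
    refine integral_mono (((integrable_const _).sub (hAint _ _)).sub (hAint _ _)) hTint fun ω => ?_
    simp only [Set.indicator_apply, hA, Set.mem_ofPred_eq]
    have h0 : (0 : ℝ) ≤ coverTimeMulti B (k+1) ω := by positivity
    by_cases h1 : coverTimeMulti B (k+1) ω ≤ n₁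
    · by_cases h2 : coverTimeMulti B (k+1) ω ≤ n₂
      · simp [h1, h2]
      · simp [h1, h2]; omega
    · have h2 : ¬ coverTimeMulti B (k+1) ω ≤ n₂ := by omega
      simp [h1, h2]; omega
  have hs : Integrable (fun ω => (n₁ : ℝ) - (A n₂).indicator (fun _ => (n₂ : ℝ)) ω) μ :=
    (integrable_const _).sub (hAint _ _)
  rw [integral_sub hs (hAint _ _), integral_sub (integrable_const _) (hAint _ _), integral_indicator_const _ (hAm _),
    integral_indicator_const _ (hAm _)] at key
  simp only [integral_const, smul_eq_mul, probReal_univ, one_mul] at key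
  have a1 := measure_cover_le hB hI hU k n₁
  have a2 := measure_cover_le hB hI hU k n₂
  have b1 := mul_le_mul_of_nonneg_left a1 (sub_nonneg.2 h')
  have b2 := mul_le_mul_of_nonneg_left a2 (Nat.cast_nonneg (α := ℝ) n₂)
  simp only [hA] at key
  nlinarith [key, b1, b2]

end fixedB

section asym

variable {B : ℕ} {μ : Measure (ℕ → Fin B)}

lemma upper_explicit [IsProbabilityMeasure μ] (hB : 1 ≤ B)
    (hI : iIndepFun (fun i (ω : ℕ → Fin B) => ω i) μ)
    (hU : ∀ i : ℕ, μ.map (fun ω => ω i) = uniformFin B) (k : ℕ) (hL : 2 ≤ Real.log B) :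
    ∫ ω, (coverTimeMulti B (k+1) ω : ℝ) ∂μ ≤
      B * Real.log B + k * (B * Real.log (Real.log B)) + 1 + 2 * Real.exp (1 + k) * B := by
  have hB' : (1 : ℝ) ≤ B := by exact_mod_cast hB
  set L := Real.log B with hLdef
  set l := Real.log L with hl
  have hl0 : 0 ≤ l := Real.log_nonneg (by linarith)
  have hlL : l ≤ L := (Real.log_le_sub_one_of_pos (by linarith)).trans (by linarith)
  have hexpL : Real.exp L = B := Real.exp_log (by linarith)
  have hexpl : Real.exp l = L := Real.exp_log (by linarith)
  set x := L + k * l with hx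
  have hx0 : 0 ≤ x := by positivity
  have hs0 : 0 < L⁻¹ := by positivity
  have hs2 : L⁻¹ ≤ 1/2 := by rw [one_div]; exact inv_anti₀ (by norm_num) hL
  have h := (upper hB hI hU ⌈B * x⌉₊ k L⁻¹ hs0 (by linarith)).2
  have hn1 : (B : ℝ) * x ≤ ⌈B * x⌉₊ := Nat.le_ceil _
  have hn2 : (⌈B * x⌉₊ : ℝ) ≤ B * x + 1 := (Nat.ceil_lt_add_one (by positivity)).le
  have hd1 : (1 - L⁻¹) / B ≤ 1 := by
    rw [div_le_one (by linarith)]; linarith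
  have hq : (1 - (1 - L⁻¹) / B) ^ ⌈B * x⌉₊ ≤ Real.exp (1 + k) / (B * L ^ k) := by
    have e1 : 1 - (1 - L⁻¹) / B ≤ Real.exp (-((1 - L⁻¹) / B)) := by
      have := Real.add_one_le_exp (-((1 - L⁻¹) / B)); linarith
    calc (1 - (1 - L⁻¹) / B) ^ ⌈B * x⌉₊ ≤ Real.exp (-((1 - L⁻¹) / B)) ^ ⌈B * x⌉₊ :=
          pow_le_pow_left₀ (by linarith) e1 _
      _ = Real.exp (⌈B * x⌉₊ * (-((1 - L⁻¹) / B))) := by rw [← Real.exp_nat_mul]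
      _ ≤ Real.exp ((1 + k) - (L + k * l)) := by
          apply Real.exp_le_exp.2
          have hd0 : 0 ≤ (1 - L⁻¹) / B := div_nonneg (by linarith) (by linarith)
          have h1 : (B * x) * ((1 - L⁻¹) / B) ≤ ⌈B * x⌉₊ * ((1 - L⁻¹) / B) := by gcongr
          have h2 : (B * x) * ((1 - L⁻¹) / B) = x - (1 + k * (l / L)) := by
            rw [hx]; field_simp
          have h3 : k * (l / L) ≤ k * 1 := by
            gcongr
            rw [div_le_one (by linarith)]; exact hlL
          linarith
      _ = _ := by
          rw [Real.exp_sub, Real.exp_add L, Real.exp_nat_mul, hexpL, hexpl]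
  have hfin : (B : ℝ) * ((L⁻¹)⁻¹ ^ k * (1 - (1 - L⁻¹) / B) ^ ⌈B * x⌉₊) * (B / (1 - L⁻¹))
      ≤ 2 * Real.exp (1 + k) * B := by
    have h1 : (B : ℝ) / (1 - L⁻¹) ≤ 2 * B := by
      rw [div_le_iff₀ (by linarith)]; nlinarith
    calc _ ≤ (B : ℝ) * (L ^ k * (Real.exp (1 + k) / (B * L ^ k))) * (2 * B) := by
          rw [inv_inv]
          have : 0 ≤ (B : ℝ) / (1 - L⁻¹) := div_nonneg (by linarith) (by linarith)
          gcongr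
      _ = _ := by
          have : L ^ k ≠ 0 := by positivity
          field_simp
  have : (B : ℝ) * x = B * L + k * (B * l) := by rw [hx]; ring
  linarith

/-- the constant of the lower bound -/
noncomputable def cst (k : ℕ) : ℝ := 4 ^ k * k.factorial * Real.exp (1 + k)

lemma cst_pos (k : ℕ) : 0 < cst k := by unfold cst; positivity

lemma done_explicit [IsProbabilityMeasure μ] (hB : 2 ≤ B)
    (hI : iIndepFun (fun i (ω : ℕ → Fin B) => ω i) μ)
    (hU : ∀ i : ℕ, μ.map (fun ω => ω i) = uniformFin B) (k : ℕ) (hL : 2 ≤ Real.log B)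
    (hkB : 4 * k ≤ B) (δ : ℝ) (hδ0 : 0 ≤ δ) (hδ1 : δ ≤ 1) :
    μ.real (done B (k+1) ⌊B * (Real.log B + (k - δ) * Real.log (Real.log B))⌋₊) ≤
      cst k * Real.exp (-(δ * Real.log (Real.log B))) + 4 * k / B := by
  have hB' : (2 : ℝ) ≤ B := by exact_mod_cast hB
  have hkB' : (4 : ℝ) * k ≤ B := by exact_mod_cast hkB
  set L := Real.log B with hLdef
  set l := Real.log L with hl
  have hl0 : 0 ≤ l := Real.log_nonneg (by linarith)
  have hlL : l ≤ L / 2 := by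
    have h1 := Real.log_le_sub_one_of_pos (x := L / 2) (by linarith)
    rw [Real.log_div (by linarith) (by norm_num)] at h1
    have := Real.log_two_lt_d9
    linarith
  have hexpL : Real.exp L = B := Real.exp_log (by linarith)
  have hexpl : Real.exp l = L := Real.exp_log (by linarith)
  have hLB : L ≤ B - 1 := Real.log_le_sub_one_of_pos (by linarith)
  set x := L + (k - δ) * l with hx
  have hkl : 0 ≤ k * l := by positivity
  have hx1 : L / 2 ≤ x := by
    rw [hx]; nlinarith
  have hx2 : x ≤ (1 + k) * (B - 1) := by
    have h1 : x ≤ L + k * l := by rw [hx]; nlinarith [mul_nonneg hδ0 hl0]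
    have h2 : (k : ℝ) * l ≤ k * L := by gcongr; linarith
    have h3 : (1 + k) * L ≤ (1 + k) * (B - 1 : ℝ) := by gcongr
    linarith
  set n := ⌊B * x⌋₊ with hn
  have hx0 : 1 ≤ x := by linarith
  have hn1 : (n : ℝ) ≤ B * x := Nat.floor_le (by positivity)
  have hn2 : (B : ℝ) * x < n + 1 := Nat.lt_floor_add_one _
  have hBn : B ≤ n := Nat.le_floor (by nlinarith)
  refine (lower_prob hB hI hU n k (by omega) hkB).trans ?_
  gcongr
  have hchoose : (B * L / 4) ^ k / k.factorial ≤ (n.choose k : ℝ) := by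
    have h1 := Nat.pow_le_choose (α := ℝ) k n
    refine le_trans ?_ h1
    gcongr
    rw [Nat.cast_sub (by omega)]
    push_cast
    nlinarith
  have hpow : Real.exp (-(x + 1 + k)) ≤ (1 - (B : ℝ)⁻¹) ^ (n - k) := by
    have hb0 : 0 ≤ 1 - (B : ℝ)⁻¹ := by
      have : (B : ℝ)⁻¹ ≤ 1 := inv_le_one_of_one_le₀ (by linarith)
      linarith
    have hb1 : 1 - (B : ℝ)⁻¹ ≤ 1 := by
      have : 0 ≤ (B : ℝ)⁻¹ := by positivity
      linarith
    have e1 : Real.exp (-(1 / (B - 1 : ℝ))) ≤ 1 - (B : ℝ)⁻¹ := by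
      have h1 := Real.add_one_le_exp (1 / (B - 1 : ℝ))
      have h2 : 1 / (B - 1 : ℝ) + 1 = (1 - (B : ℝ)⁻¹)⁻¹ := by
        have : (B : ℝ) - 1 ≠ 0 := by linarith
        field_simp
        ring
      rw [h2] at h1
      rw [Real.exp_neg]
      have h3 : 0 < 1 - (B : ℝ)⁻¹ := by
        have : (B : ℝ)⁻¹ < 1 := inv_lt_one_of_one_lt₀ (by linarith)
        linarith
      exact inv_le_of_inv_le₀ h3 h1
    calc Real.exp (-(x + 1 + k)) ≤ Real.exp (n * (-(1 / (B - 1 : ℝ)))) := by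
          apply Real.exp_le_exp.2
          have h1 : (n : ℝ) * (1 / (B - 1)) ≤ B * x * (1 / (B - 1)) := by
            have : 0 ≤ 1 / (B - 1 : ℝ) := by
              apply div_nonneg <;> linarith
            gcongr
          have h2 : B * x * (1 / (B - 1)) = x + x / (B - 1) := by
            have : (B : ℝ) - 1 ≠ 0 := by linarith
            field_simp
            ring
          have h3 : x / (B - 1) ≤ 1 + k := by
            rw [div_le_iff₀ (by linarith)]; exact hx2
          linarith
      _ = Real.exp (-(1 / (B - 1 : ℝ))) ^ n := by rw [← Real.exp_nat_mul]
      _ ≤ (1 - (B : ℝ)⁻¹) ^ n := pow_le_pow_left₀ (Real.exp_pos _).le e1 _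
      _ ≤ _ := pow_le_pow_of_le_one hb0 hb1 (by omega)
  have hmain : (cst k * Real.exp (-(δ * l)))⁻¹ ≤
      B * (n.choose k * ((B : ℝ)⁻¹ ^ k * (1 - (B : ℝ)⁻¹) ^ (n - k))) := by
    calc (cst k * Real.exp (-(δ * l)))⁻¹
        = B * ((B * L / 4) ^ k / k.factorial * ((B : ℝ)⁻¹ ^ k * Real.exp (-(x + 1 + k)))) := by
          have : Real.exp (-(x + 1 + k)) =
              (B : ℝ)⁻¹ * (L ^ k)⁻¹ * (Real.exp (-(δ * l)))⁻¹ * (Real.exp (1 + k))⁻¹ := by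
            rw [← hexpl, ← Real.exp_nat_mul, ← hexpL, ← Real.exp_neg, ← Real.exp_neg, ← Real.exp_neg,
              ← Real.exp_neg, ← Real.exp_add, ← Real.exp_add, ← Real.exp_add, hx]
            congr 1; ring
          rw [this]
          unfold cst
          have : L ^ k ≠ 0 := by positivity
          rw [div_pow, mul_pow, inv_pow]
          field_simp
      _ ≤ _ := by gcongr
  have hpos : 0 < cst k * Real.exp (-(δ * l)) := mul_pos (cst_pos k) (Real.exp_pos _)
  exact inv_le_of_inv_le₀ hpos hmain

lemma lower_explicit [IsProbabilityMeasure μ] (hB : 2 ≤ B)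
    (hI : iIndepFun (fun i (ω : ℕ → Fin B) => ω i) μ)
    (hU : ∀ i : ℕ, μ.map (fun ω => ω i) = uniformFin B) (k : ℕ) (hL : 2 ≤ Real.log B)
    (hkB : 4 * k ≤ B) (hl1 : 1 ≤ Real.log (Real.log B)) (ε : ℝ) (hε0 : 0 ≤ ε) (hε1 : ε ≤ 1) :
    B * Real.log B + (k - ε) * (B * Real.log (Real.log B)) - 1
      - (1 + k) * (cst k + 4 * k) * B
      - 2 * (B * Real.log (Real.log B)) *
        (cst k * Real.exp (-(ε * Real.log (Real.log B))) + 4 * k / B)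
     ≤ ∫ ω, (coverTimeMulti B (k+1) ω : ℝ) ∂μ := by
  have hB' : (2 : ℝ) ≤ B := by exact_mod_cast hB
  have D1 := done_explicit hB hI hU k hL hkB ε hε0 hε1
  have D2 := done_explicit hB hI hU k hL hkB 1 (by norm_num) le_rfl
  set L := Real.log B with hLdef
  set l := Real.log L with hl
  have hexpl : Real.exp l = L := Real.exp_log (by linarith)
  have hLB : L ≤ B := (Real.log_le_sub_one_of_pos (by linarith)).trans (by linarith)
  have hlL : l ≤ L := (Real.log_le_sub_one_of_pos (by linarith)).trans (by linarith)
  have hkl : 0 ≤ k * l := by positivity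
  have hx2 : 0 ≤ L + (k - 1) * l := by nlinarith
  have hx12 : L + (k - 1) * l ≤ L + (k - ε) * l := by gcongr
  have hle : ⌊B * (L + (k - 1) * l)⌋₊ ≤ ⌊B * (L + (k - ε) * l)⌋₊ := by
    apply Nat.floor_le_floor
    gcongr
  have h := lower (by omega) hI hU k _ _ hle
  set n₁ := ⌊B * (L + (k - ε) * l)⌋₊ with hn₁
  set n₂ := ⌊B * (L + (k - 1) * l)⌋₊ with hn₂
  have a1 : (n₁ : ℝ) ≤ B * (L + (k - ε) * l) := Nat.floor_le (by nlinarith)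
  have a2 : B * (L + (k - ε) * l) < n₁ + 1 := Nat.lt_floor_add_one _
  have a3 : (n₂ : ℝ) ≤ B * (L + (k - 1) * l) := Nat.floor_le (by positivity)
  have a4 : B * (L + (k - 1) * l) < n₂ + 1 := Nat.lt_floor_add_one _
  have b2 : (n₂ : ℝ) * μ.real (done B (k+1) n₂) ≤ (1 + k) * (cst k + 4 * k) * B := by
    have c1 : (n₂ : ℝ) ≤ (1 + k) * (B * L) := by
      refine a3.trans ?_
      have : L + (k - 1) * l ≤ (1 + k) * L := by
        have : (k : ℝ) * l ≤ k * L := by gcongr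
        linarith
      calc _ ≤ (B : ℝ) * ((1 + k) * L) := by gcongr
        _ = _ := by ring
    have c2 : Real.exp (-(1 * l)) = L⁻¹ := by rw [one_mul, Real.exp_neg, hexpl]
    rw [c2] at D2
    calc _ ≤ (1 + k) * (B * L) * (cst k * L⁻¹ + 4 * k / B) := by
          have := cst_pos k
          gcongr
      _ = (1 + k) * (cst k * B + 4 * k * L) := by field_simp
      _ ≤ (1 + k) * (cst k * B + 4 * k * B) := by gcongr
      _ = _ := by ring
  have b1 : ((n₁ : ℝ) - n₂) * μ.real (done B (k+1) n₁) ≤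
      2 * (B * l) * (cst k * Real.exp (-(ε * l)) + 4 * k / B) := by
    have c1 : (n₁ : ℝ) - n₂ ≤ 2 * (B * l) := by
      have : 1 ≤ B * l := by nlinarith
      have : 0 ≤ ε * (B * l) := by positivity
      nlinarith
    gcongr
  have : B * (L + (k - ε) * l) = B * L + (k - ε) * (B * l) := by ring
  linarith

end asym

end DixieCup

theorem newman_shepp_double_dixie_cup
    (F : ℕ) (hF : 1 ≤ F)
    (μ : ∀ B : ℕ, Measure (ℕ → Fin B))
    (hprob : ∀ B : ℕ, 1 ≤ B → IsProbabilityMeasure (μ B))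
    (hIndep : ∀ B : ℕ, 1 ≤ B →
      iIndepFun (fun i (ω : ℕ → Fin B) => ω i) (μ B))
    (hUnif : ∀ B : ℕ, 1 ≤ B → ∀ i : ℕ, (μ B).map (fun ω => ω i) = uniformFin B) :
    Tendsto
      (fun B : ℕ =>
        ((∫ ω, (coverTimeMulti B F ω : ℝ) ∂(μ B)) - B * Real.log B)
          / (B * Real.log (Real.log B)))
      atTop (nhds ((F : ℝ) - 1)) := by
  obtain ⟨k, rfl⟩ : ∃ k, F = k + 1 := ⟨F - 1, by omega⟩
  have hkk : ((k + 1 : ℕ) : ℝ) - 1 = k := by push_cast; ring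
  rw [hkk]
  have tL : Tendsto (fun B : ℕ => Real.log B) atTop atTop :=
    Real.tendsto_log_atTop.comp tendsto_natCast_atTop_atTop
  have tl : Tendsto (fun B : ℕ => Real.log (Real.log B)) atTop atTop :=
    Real.tendsto_log_atTop.comp tL
  have tB : Tendsto (fun B : ℕ => (B : ℝ)) atTop atTop := tendsto_natCast_atTop_atTop
  rw [tendsto_order]
  constructor
  · intro a ha
    obtain ⟨ε, hε0, hε1, hεa⟩ : ∃ ε : ℝ, 0 < ε ∧ ε ≤ 1 ∧ a < k - ε := by
      refine ⟨min 1 ((k - a) / 2), lt_min one_pos (by linarith), min_le_left _ _, ?_⟩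
      have := min_le_right 1 ((k - a) / 2)
      linarith
    have tlim : Tendsto (fun B : ℕ => (k - ε) - 1 / Real.log (Real.log B)
        - (1 + k) * (DixieCup.cst k + 4 * k) / Real.log (Real.log B)
        - 2 * (DixieCup.cst k * Real.exp (-(ε * Real.log (Real.log B))) + 4 * k / B)) atTop
        (nhds ((k - ε) - 0 - 0 - 2 * (DixieCup.cst k * 0 + 0))) := by
      refine Tendsto.sub (Tendsto.sub (Tendsto.sub tendsto_const_nhds ?_) ?_)
        (Tendsto.const_mul _ (Tendsto.add (Tendsto.const_mul _ ?_) ?_))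
      · exact tl.const_div_atTop _
      · exact tl.const_div_atTop _
      · exact Real.tendsto_exp_neg_atTop_nhds_zero.comp (tl.const_mul_atTop hε0)
      · exact tB.const_div_atTop _
    have hev := tlim.eventually (lt_mem_nhds (a := a) (by simpa using hεa))
    filter_upwards [hev, tL.eventually_ge_atTop 2, tl.eventually_ge_atTop 1,
      eventually_ge_atTop 2, eventually_ge_atTop (4 * k)] with B h1 h2 h3 h4 h5
    have := hprob B (by omega)
    have h := DixieCup.lower_explicit h4 (hIndep B (by omega)) (hUnif B (by omega)) k h2 h5 h3 ε
      hε0.le hε1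
    refine lt_of_lt_of_le h1 ?_
    have hB' : (2 : ℝ) ≤ B := by exact_mod_cast h4
    generalize Real.log (Real.log B) = l at *
    have hpos : 0 < B * l := by positivity
    rw [le_div_iff₀ hpos]
    have e1 : (1 / l) * (B * l) = B := by field_simp
    have e2 : ((1 + k) * (DixieCup.cst k + 4 * k) / l) * (B * l)
      = (1 + k) * (DixieCup.cst k + 4 * k) * B := by field_simp
    rw [sub_mul, sub_mul, sub_mul, e1, e2]
    linarith
  · intro b hb
    have tlim : Tendsto (fun B : ℕ => k + (1 + 2 * Real.exp (1 + k)) / Real.log (Real.log B)) atTop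
        (nhds (k + 0)) :=
      tendsto_const_nhds.add (tl.const_div_atTop _)
    have hev := tlim.eventually_lt_const (u := b) (by simpa using hb)
    filter_upwards [hev, tL.eventually_ge_atTop 2, tl.eventually_ge_atTop 1,
      eventually_ge_atTop 2] with B h1 h2 h3 h4
    have := hprob B (by omega)
    have h := DixieCup.upper_explicit (by omega) (hIndep B (by omega)) (hUnif B (by omega)) k h2
    refine lt_of_le_of_lt ?_ h1
    have hB' : (2 : ℝ) ≤ B := by exact_mod_cast h4
    generalize Real.log (Real.log B) = l at *
    have hpos : 0 < B * l := by positivity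
    rw [div_le_iff₀ hpos]
    have e1 : ((1 + 2 * Real.exp (1 + k)) / l) * (B * l) = B + 2 * Real.exp (1 + k) * B := by
      field_simp
    rw [add_mul, e1]
    linarith
end
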